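/- arXiv:0909.2347 — 3 statements merged into one kernel-verified Lean document; each statement's English description precedes it below -/
import Mathlib

section
/- Let n ≥ 2, k ≥ 1 and work at z = 1. Then all structure constants ⟨m(ν), s_λ(𝒜)·m(μ)⟩ (λ, μ, ν ∈ 𝔓_{≤n−1,k}) are integers, and the ℤ-linear map from the free ℤ-module with basis 𝔓_{≤n−1,k}, equipped with the product λ ⊛ μ = Σ_ν ⟨m(ν), s_λ(𝒜)·m(μ)⟩·ν, to the quotient ring Λ^{(k)}/⟨h_n − 1, h_{n+1}, …, h_{n+k−1}, h_{n+k} + (−1)^k e_k⟩ that sends λ to the class of the Schur polynomial s_{λ^t}, is an isomorphism of rings. -/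
set_option synthInstance.maxHeartbeats 1000000
set_option maxHeartbeats 1000000

noncomputable section

open scoped BigOperators

/-- `𝔓_{≤r,c}`: partitions with at most `r` parts, each part at most `c`,
encoded as weakly decreasing functions `Fin r → Fin (c+1)`. -/
abbrev PartBox (r c : ℕ) :=
  {f : Fin r → Fin (c + 1) // ∀ i j : Fin r, i ≤ j → (f j : ℕ) ≤ (f i : ℕ)}

/-- The parts of a partition, as natural numbers. -/
def partVal {r c : ℕ} (σ : PartBox r c) (i : Fin r) : ℕ := (σ.1 i : ℕ)

/-- `|σ|`, the number of boxes of the partition. -/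
def partSum {r c : ℕ} (σ : PartBox r c) : ℕ := ∑ i, partVal σ i

/-- A tuple of parts, padded by zeros to an arbitrary length. -/
def padded {r : ℕ} (f : Fin r → ℕ) (t : ℕ) : ℕ := if h : t < r then f ⟨t, h⟩ else 0

/-- The transpose (conjugate) partition of `μ`, with `c` parts:
`(transpGen μ c) j = μ^t_{j+1} = #{i | μ_i ≥ j+1}`. -/
def transpGen {r : ℕ} (μ : Fin r → ℕ) (c : ℕ) : Fin c → ℕ :=
  fun j => (Finset.univ.filter fun i : Fin r => (j : ℕ) + 1 ≤ μ i).card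

/-- `I^{(m)}(τ)_j = (m+1)/2 + τ_{m+1-j} - (m+1-j)` (1-based `j`), as a rational number. -/
def Imap (m : ℕ) (τ : Fin m → ℕ) (j : Fin m) : ℚ :=
  ((m : ℚ) + 1) / 2 + (τ j.rev : ℚ) - ((m : ℚ) - (j : ℚ))

/-- `ζ^t = exp(2πι t/N)` for rational exponents `t`. -/
def zeta (N : ℕ) (t : ℚ) : ℂ :=
  Complex.exp (2 * Real.pi * Complex.I * (t : ℂ) / (N : ℂ))

/-- Complete homogeneous symmetric polynomial `h_r(x)` of a tuple of complex numbers,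
with `h_0 = 1` and `h_r = 0` for `r < 0`. -/
def hC {m : ℕ} (x : Fin m → ℂ) (r : ℤ) : ℂ :=
  if 0 ≤ r then
    ∑ p ∈ (Fintype.piFinset fun _ : Fin m => Finset.range (r.toNat + 1)).filter
        (fun p => ∑ i, p i = r.toNat),
      ∏ i, x i ^ p i
  else 0

/-- The Schur polynomial `s_λ(x) = det(h_{λ_i - i + j}(x))_{1 ≤ i,j ≤ m}` of a partition
with at most `m` parts, evaluated at an `m`-tuple of complex numbers. -/
def schurC {m : ℕ} (x : Fin m → ℂ) (lam : Fin m → ℕ) : ℂ :=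
  (Matrix.of fun i j : Fin m => hC x ((lam i : ℤ) - (i : ℕ) + (j : ℕ))).det

/-- A canonical "gap" of a proper subset `I ⊊ ℤ/nℤ`: the element of the complement with
the smallest representative. -/
def zgap {n : ℕ} [NeZero n] (I : Finset (ZMod n)) : ZMod n :=
  if h : ((Finset.univ \ I).image ZMod.val).Nonempty then
    ((((Finset.univ \ I).image ZMod.val).min' h : ℕ) : ZMod n)
  else 0

/-- The cyclically ordered product `∏_{i ∈ I} a_i` in which, whenever `i, i+1 ∈ I`, the
factor `a_{i+1}` stands to the left of the factor `a_i`. -/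
def cycProdDesc {n : ℕ} [NeZero n] {A : Type*} [Monoid A] (a : ZMod n → A)
    (I : Finset (ZMod n)) : A :=
  ((List.range n).map fun t =>
    if zgap I - 1 - (t : ZMod n) ∈ I then a (zgap I - 1 - (t : ZMod n)) else 1).prod

/-- The determinant of a square matrix over a (possibly noncommutative) ring, expanded via
the Leibniz formula, the factors of each summand multiplied in the order of the columns. -/
def ncDet {A : Type*} [Ring A] {r : ℕ} (M : Fin r → Fin r → A) : A :=
  ∑ σ : Equiv.Perm (Fin r),
    ((Equiv.Perm.sign σ : ℤ) : A) * ((List.finRange r).map fun i => M (σ i) i).prod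

/-- The `k`-particle space `H_k`, the free `R`-module with basis `𝔓_{≤ n-1,k}`
(a partition `λ` is identified with the level-`k` configuration `m(λ)`). -/
abbrev HkSp (R : Type*) [CommRing R] (n k : ℕ) := PartBox (n - 1) k →₀ R

/-- The configuration `m(λ)` on `ℤ/nℤ` attached to a partition `λ ∈ 𝔓_{≤ n-1,k}`:
`m(λ)_i = λ_i - λ_{i+1}` for `1 ≤ i ≤ n-1` and `m(λ)_0 = k - λ_1`. -/
def cfgOf (n k : ℕ) (σ : PartBox (n - 1) k) (c : ZMod n) : ℕ :=
  if c.val = 0 then k - padded (partVal σ) 0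
  else padded (partVal σ) (c.val - 1) - padded (partVal σ) (c.val)

/-- The basis vector of `H_k` labelled by a configuration `m` (zero if `m` is not the
configuration of a partition in the box), with coefficient `r`. -/
def toBasis (R : Type*) [CommRing R] (n k : ℕ) [NeZero n] (m : ZMod n → ℕ) (r : R) :
    HkSp R n k :=
  ∑ μ : PartBox (n - 1) k, if cfgOf n k μ = m then Finsupp.single μ r else 0

/-- The hopping operator `a_i` on `H_k`: move one particle from site `i` to site `i+1`
(zero if site `i` is unoccupied), with the extra factor `z` when `i = 0`. -/
def aOp (R : Type*) [CommRing R] (n k : ℕ) [NeZero n] (z : R) (i : ZMod n) :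
    Module.End R (HkSp R n k) :=
  Finsupp.lift (HkSp R n k) R (PartBox (n - 1) k) fun σ =>
    if cfgOf n k σ i = 0 then 0
    else
      toBasis R n k
        (fun c => cfgOf n k σ c - (Pi.single i 1 : ZMod n → ℕ) c +
          (Pi.single (i + 1) 1 : ZMod n → ℕ) c)
        (if i = 0 then z else 1)

/-- The noncommutative elementary symmetric polynomials `e_t(𝒜)` in the hopping operators,
with the conventions `e_0 = id`, `e_n = z • id` and `e_t = 0` for `t < 0` or `t > n`. -/
def eAInt (R : Type*) [CommRing R] (n k : ℕ) [NeZero n] (z : R) (t : ℤ) :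
    Module.End R (HkSp R n k) :=
  if t = 0 then 1
  else if 1 ≤ t ∧ t ≤ (n : ℤ) - 1 then
    ∑ I ∈ Finset.powersetCard t.toNat (Finset.univ : Finset (ZMod n)),
      cycProdDesc (aOp R n k z) I
  else if t = (n : ℤ) then z • (1 : Module.End R (HkSp R n k)) else 0

/-- The noncommutative Schur polynomial
`s_λ(𝒜) = det(e_{λ^t_i - i + j}(𝒜))_{1 ≤ i,j ≤ λ_1}`. -/
def sAOp (R : Type*) [CommRing R] (n k : ℕ) [NeZero n] (z : R) (σ : PartBox (n - 1) k) :
    Module.End R (HkSp R n k) :=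
  ncDet fun i j : Fin (padded (partVal σ) 0) =>
    eAInt R n k z
      ((transpGen (partVal σ) (padded (partVal σ) 0) i : ℤ) - ((i : ℕ) : ℤ) + ((j : ℕ) : ℤ))

/-- The padded partition `λ̂ = (λ_1 + m_0, …, λ_{n-1} + m_0, m_0)` with `m_0 = k - λ_1`. -/
def lamHat (n k : ℕ) (σ : PartBox (n - 1) k) (i : Fin n) : ℕ :=
  padded (partVal σ) i + (k - padded (partVal σ) 0)

/-- The Bethe vector `b(x) = Σ_λ s_{λ̂^t}(x₁⁻¹, …, x_k⁻¹) · m(λ) ∈ H_k`. -/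
def betheVec (n k : ℕ) (x : Fin k → ℂ) : HkSp ℂ n k :=
  ∑ σ : PartBox (n - 1) k,
    Finsupp.single σ (schurC (fun i => (x i)⁻¹) (transpGen (lamHat n k σ) k))

/-- The Hermitian inner product on `H_k` (conjugate-linear in the first argument) making
the basis of partitions/configurations orthonormal. -/
def pairHk {n k : ℕ} (f g : HkSp ℂ n k) : ℂ :=
  ∑ σ : PartBox (n - 1) k, (starRingEnd ℂ) (f σ) * g σ

open MvPolynomial in
/-- The complete homogeneous symmetric polynomials `h_t` as elements of the ring
`Λ^{(k)} = ℤ[e_1, …, e_k]` of symmetric polynomials in `k` variables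
(with `h_t = 0` for `t < 0`). -/
def hLam (k : ℕ) (t : ℤ) : ↥(symmetricSubalgebra (Fin k) ℤ) :=
  if 0 ≤ t then
    ⟨hsymm (Fin k) ℤ t.toNat,
      (mem_symmetricSubalgebra _).2 (hsymm_isSymmetric (Fin k) ℤ t.toNat)⟩
  else 0

open MvPolynomial in
/-- The elementary symmetric polynomial `e_r` as an element of `Λ^{(k)}`. -/
def eLam (k r : ℕ) : ↥(symmetricSubalgebra (Fin k) ℤ) :=
  ⟨esymm (Fin k) ℤ r, (mem_symmetricSubalgebra _).2 (esymm_isSymmetric (Fin k) ℤ r)⟩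

open MvPolynomial in
/-- The Schur polynomial `s_μ = det(h_{μ_i-i+j})_{1 ≤ i,j ≤ k}` of a partition `μ` with at
most `k` parts, as an element of `Λ^{(k)}`. -/
def schurLam (k : ℕ) (μ : Fin k → ℕ) : ↥(symmetricSubalgebra (Fin k) ℤ) :=
  (Matrix.of fun i j : Fin k => hLam k ((μ i : ℤ) - (i : ℕ) + (j : ℕ))).det

open MvPolynomial in
/-- The ideal `⟨h_n - 1, h_{n+1}, …, h_{n+k-1}, h_{n+k} + (-1)^k e_k⟩` of `Λ^{(k)}`. -/
def fusionIdeal (n k : ℕ) : Ideal ↥(symmetricSubalgebra (Fin k) ℤ) :=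
  Ideal.span
    {x | x = hLam k (n : ℤ) - 1 ∨
      (∃ j : ℕ, 1 ≤ j ∧ j ≤ k - 1 ∧ x = hLam k ((n : ℤ) + (j : ℤ))) ∨
      x = hLam k ((n : ℤ) + (k : ℤ)) + (-1) ^ k * eLam k k}

open MvPolynomial in
/-- The ℤ-linear map from the free ℤ-module with basis `𝔓_{≤ n-1,k}` to the quotient ring
`Λ^{(k)}/⟨h_n - 1, h_{n+1}, …, h_{n+k-1}, h_{n+k} + (-1)^k e_k⟩`, sending a partition `λ`
to the class of the Schur polynomial `s_{λ^t}`. -/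
def fusionToQuot (n k : ℕ) :
    (PartBox (n - 1) k →₀ ℤ) →ₗ[ℤ]
      (↥(symmetricSubalgebra (Fin k) ℤ) ⧸ fusionIdeal n k) :=
  Finsupp.lift _ ℤ (PartBox (n - 1) k) fun σ =>
    Ideal.Quotient.mk (fusionIdeal n k) (schurLam k (transpGen (partVal σ) k))

/-- The fusion product on the free ℤ-module with basis `𝔓_{≤ n-1,k}`, with structure
constants the (integral) matrix elements `⟨m(ν), s_λ(𝒜) m(μ)⟩` (read off as integers via
the floor of the real part, cf. the integrality assertion). -/
def fusionMulZ (n k : ℕ) [NeZero n] (lam mu : PartBox (n - 1) k) :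
    PartBox (n - 1) k →₀ ℤ :=
  ∑ nu : PartBox (n - 1) k,
    Finsupp.single nu
      ⌊(pairHk (Finsupp.single nu 1) (sAOp ℂ n k 1 lam (Finsupp.single mu 1))).re⌋

/-- The empty partition. -/
def partEmpty (r c : ℕ) : PartBox r c := ⟨fun _ => 0, by intro i j _; simp⟩

namespace FR
open MvPolynomial in
lemma geo_mul {A : Type*} [CommRing A] (a : A) :
    PowerSeries.mk (fun m => a ^ m) * (1 - PowerSeries.C a * PowerSeries.X) = 1 := by
  ext m
  rw [mul_sub, mul_one, mul_left_comm, map_sub, PowerSeries.coeff_C_mul]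
  rcases m with _ | m
  · simp
  · rw [PowerSeries.coeff_succ_mul_X]
    simp [PowerSeries.coeff_one, pow_succ']

lemma hs_gen (k : ℕ) : PowerSeries.mk (fun m => MvPolynomial.hsymm (Fin k) ℤ m) =
    ∏ i : Fin k, PowerSeries.mk (fun m => (MvPolynomial.X i : MvPolynomial (Fin k) ℤ) ^ m) := by
  ext1 m
  rw [PowerSeries.coeff_mk, PowerSeries.coeff_prod, MvPolynomial.hsymm]
  simp only [PowerSeries.coeff_mk]
  symm
  refine Finset.sum_bij' (i := fun l hl => (Sym.mk (Finsupp.toMultiset l) (by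
      have := (Finset.mem_finsuppAntidiag.1 hl).1
      rw [Finsupp.card_toMultiset, Finsupp.sum_fintype _ _ (by simp)]
      simpa using this) : Sym (Fin k) m)) (j := fun s _ => Multiset.toFinsupp (s : Multiset (Fin k))) ?_ ?_ ?_ ?_ ?_
  · intro l hl; exact Finset.mem_univ _
  · intro s _
    rw [Finset.mem_finsuppAntidiag]
    refine ⟨?_, by simp⟩
    have h2 : (s : Multiset (Fin k)).card = m := s.2
    change ∑ i, Multiset.toFinsupp (s : Multiset (Fin k)) i = m
    simp only [Multiset.toFinsupp_apply]
    rw [Multiset.sum_count_eq_card (by simp)]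
    exact h2
  · intro l hl
    show Multiset.toFinsupp (Finsupp.toMultiset l) = l
    simp
  · intro s _
    apply Sym.coe_injective
    show Finsupp.toMultiset (Multiset.toFinsupp (s : Multiset (Fin k))) = s
    simp
  · intro l hl
    show _ = ((Finsupp.toMultiset l).map MvPolynomial.X).prod
    rw [Finsupp.toMultiset_map, Finsupp.prod_toMultiset, Finsupp.prod_mapDomain_index (by simp) (by intros; rw [pow_add]),
      Finsupp.prod_fintype _ _ (by simp)]

lemma prod_gen {A : Type*} [CommRing A] {ι : Type*} [DecidableEq ι] (s : Finset ι) (x : ι → A) (m : ℕ) :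
    PowerSeries.coeff m (∏ i ∈ s, (1 - PowerSeries.C (x i) * PowerSeries.X)) =
      (-1) ^ m * ∑ t ∈ Finset.powersetCard m s, ∏ i ∈ t, x i := by
  have : ∀ i, (1 - PowerSeries.C (x i) * PowerSeries.X : PowerSeries A) =
      1 + PowerSeries.C (- x i) * PowerSeries.X := by intro i; simp; ring
  simp only [this]
  rw [Finset.prod_one_add, map_sum]
  have : ∀ t : Finset ι, PowerSeries.coeff m (∏ i ∈ t, (PowerSeries.C (-x i) * PowerSeries.X)) =
      if t.card = m then (-1) ^ m * ∏ i ∈ t, x i else 0 := by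
    intro t
    rw [Finset.prod_mul_distrib, Finset.prod_const, ← map_prod, PowerSeries.coeff_C_mul,
      PowerSeries.coeff_X_pow, Finset.prod_neg]
    by_cases h : t.card = m
    · simp [h]
    · simp [h, Ne.symm h]
  simp only [this]
  rw [← Finset.sum_filter, ← Finset.mul_sum, Finset.powersetCard_eq_filter]

lemma he_ps (k : ℕ) : PowerSeries.mk (fun m => MvPolynomial.hsymm (Fin k) ℤ m) *
    ∏ i : Fin k, (1 - PowerSeries.C (MvPolynomial.X i : MvPolynomial (Fin k) ℤ) * PowerSeries.X) = 1 := by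
  rw [hs_gen, ← Finset.prod_mul_distrib]
  exact Finset.prod_eq_one fun i _ => geo_mul _

lemma he_rel (k m : ℕ) : ∑ p ∈ Finset.HasAntidiagonal.antidiagonal m, MvPolynomial.hsymm (Fin k) ℤ p.1 *
    ((-1) ^ p.2 * MvPolynomial.esymm (Fin k) ℤ p.2) = if m = 0 then 1 else 0 := by
  have := congrArg (PowerSeries.coeff m) (he_ps k)
  rw [PowerSeries.coeff_mul, PowerSeries.coeff_one] at this
  simp only [prod_gen, PowerSeries.coeff_mk] at this
  exact this

/-- coefficients of the partial product -/
def kap (k : ℕ) (l : Fin k) (s : ℕ) : MvPolynomial (Fin k) ℤ :=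
  PowerSeries.coeff s (∏ i ∈ Finset.univ.erase l,
    (1 - PowerSeries.C (MvPolynomial.X i : MvPolynomial (Fin k) ℤ) * PowerSeries.X))

lemma kap_zero (k : ℕ) (l : Fin k) (s : ℕ) (hs : k ≤ s) : kap k l s = 0 := by
  rw [kap, prod_gen, Finset.powersetCard_eq_empty.2]
  · simp
  · have := l.2
    rw [Finset.card_erase_of_mem (Finset.mem_univ _), Finset.card_univ, Fintype.card_fin]; omega

lemma kap_rel (k : ℕ) (l : Fin k) (a : ℕ) :
    ∑ p ∈ Finset.HasAntidiagonal.antidiagonal a, MvPolynomial.hsymm (Fin k) ℤ p.1 * kap k l p.2 =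
      MvPolynomial.X l ^ a := by
  have h := he_ps k
  rw [← Finset.mul_prod_erase _ _ (Finset.mem_univ l), ← mul_assoc, mul_right_comm] at h
  have h2 := congrArg (PowerSeries.coeff a)
    (left_inv_eq_right_inv h ((mul_comm _ _).trans (geo_mul (MvPolynomial.X l : MvPolynomial (Fin k) ℤ))))
  rw [PowerSeries.coeff_mul, PowerSeries.coeff_mk] at h2
  simpa only [PowerSeries.coeff_mk, kap] using h2
end FR

namespace FR

lemma conv_inv {A : Type*} [CommRing A] (N : ℕ) (h g : ℤ → A) (hneg : ∀ m < 0, h m = 0)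
    (gneg : ∀ m < 0, g m = 0)
    (hg : ∀ m : ℕ, ∑ p ∈ Finset.HasAntidiagonal.antidiagonal m, h p.1 * g p.2 = if m = 0 then 1 else 0) :
    (Matrix.of fun a c : Fin N => h ((a : ℤ) - (c : ℤ))) *
      (Matrix.of fun a c : Fin N => g ((a : ℤ) - (c : ℤ))) = 1 := by
  ext a c
  rw [Matrix.mul_apply]
  simp only [Matrix.of_apply]
  rw [Fin.sum_univ_eq_sum_range (fun b : ℕ => h ((a : ℤ) - (b : ℤ)) * g ((b : ℤ) - (c : ℤ))) N]
  by_cases hac : (c : ℕ) ≤ a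
  · have h1 : ∑ b ∈ Finset.range N, h ((a : ℤ) - (b : ℤ)) * g ((b : ℤ) - (c : ℤ)) =
        ∑ b ∈ Finset.Ico (c : ℕ) (a + 1), h ((a : ℤ) - (b : ℤ)) * g ((b : ℤ) - (c : ℤ)) := by
      symm
      apply Finset.sum_subset
      · intro x hx
        have := a.2
        simp only [Finset.mem_Ico, Finset.mem_range] at *
        omega
      · intro x hx hx2
        simp only [Finset.mem_Ico, Finset.mem_range] at *
        by_cases hh : x < c
        · rw [gneg _ (by omega), mul_zero]
        · rw [hneg _ (by omega), zero_mul]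
    rw [h1, Finset.sum_Ico_eq_sum_range]
    have h2 := hg ((a : ℕ) - c)
    rw [← Finset.Nat.sum_antidiagonal_swap] at h2
    simp only [Prod.fst_swap, Prod.snd_swap] at h2
    rw [Finset.Nat.sum_antidiagonal_eq_sum_range_succ (fun i j : ℕ => h (j : ℤ) * g (i : ℤ))] at h2
    have h3 : (a : ℕ) + 1 - c = ((a : ℕ) - c).succ := by omega
    rw [h3]
    have h4 : (1 : Matrix (Fin N) (Fin N) A) a c = if (a : ℕ) - c = 0 then 1 else 0 := by
      rw [Matrix.one_apply]
      congr 1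
      rw [Fin.ext_iff, eq_iff_iff]; omega
    rw [h4, ← h2]
    apply Finset.sum_congr rfl
    intro x hx
    rw [Finset.mem_range] at hx
    congr 2
    · push_cast [Nat.cast_sub hac, Nat.cast_sub (show x ≤ (a:ℕ) - c by omega)]; ring
    · push_cast; ring
  · rw [Matrix.one_apply_ne (by intro hh; rw [hh] at hac; exact hac le_rfl)]
    apply Finset.sum_eq_zero
    intro x _
    by_cases hh : x < c
    · rw [gneg _ (by omega), mul_zero]
    · rw [hneg _ (by omega), zero_mul]

lemma block_minor {A : Type*} [CommRing A] {m n : Type*} [Fintype m] [Fintype n] [DecidableEq m]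
    [DecidableEq n] (M M' : Matrix (m ⊕ n) (m ⊕ n) A) (hM : M * M' = 1) :
    M.toBlocks₁₁.det = M.det * M'.toBlocks₂₂.det := by
  have h1 : M * Matrix.fromBlocks 1 M'.toBlocks₁₂ 0 M'.toBlocks₂₂ =
      Matrix.fromBlocks M.toBlocks₁₁ 0 M.toBlocks₂₁ 1 := by
    rw [← Matrix.fromBlocks_toBlocks M, ← Matrix.fromBlocks_toBlocks M', Matrix.fromBlocks_multiply,
      ← Matrix.fromBlocks_one, Matrix.fromBlocks_inj] at hM
    conv_lhs => rw [← Matrix.fromBlocks_toBlocks M, Matrix.fromBlocks_multiply]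
    rw [hM.2.1, hM.2.2.2]
    simp
  have h2 := congrArg Matrix.det h1
  rw [Matrix.det_mul, Matrix.det_fromBlocks_zero₂₁, Matrix.det_fromBlocks_zero₁₂] at h2
  simpa using h2.symm

lemma compl_minor {A : Type*} [CommRing A] (k n : ℕ) (h g : ℤ → A) (hneg : ∀ m < 0, h m = 0)
    (gneg : ∀ m < 0, g m = 0) (h0 : h 0 = 1)
    (hg : ∀ m : ℕ, ∑ p ∈ Finset.HasAntidiagonal.antidiagonal m, h p.1 * g p.2 = if m = 0 then 1 else 0)
    (w : Equiv.Perm (Fin (k + n))) :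
    (Matrix.of fun i j : Fin k => h ((w (Fin.castAdd n i) : ℤ) - (j : ℤ))).det =
      ((Equiv.Perm.sign w : ℤ) : A) *
        (Matrix.of fun i j : Fin n => g (((k + i : ℕ) : ℤ) - (w (Fin.natAdd k j) : ℤ))).det := by
  set H := (Matrix.of fun a c : Fin (k + n) => h ((a : ℤ) - (c : ℤ))) with hH
  set G := (Matrix.of fun a c : Fin (k + n) => g ((a : ℤ) - (c : ℤ))) with hG
  have hHG : H * G = 1 := conv_inv _ h g hneg gneg hg
  have hdet : H.det = 1 := by
    rw [Matrix.det_of_lowerTriangular]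
    · simp [hH, h0]
    · intro i j hij
      have hij' : i < j := hij
      have : (i : ℕ) < j := hij'
      simp only [hH, Matrix.of_apply]
      exact hneg _ (by omega)
  have e := (finSumFinEquiv : Fin k ⊕ Fin n ≃ Fin (k + n))
  have := block_minor (H.submatrix (finSumFinEquiv.trans w) (finSumFinEquiv : Fin k ⊕ Fin n ≃ Fin (k + n)))
    (G.submatrix (finSumFinEquiv : Fin k ⊕ Fin n ≃ Fin (k + n)) (finSumFinEquiv.trans w)) (by
      rw [Matrix.submatrix_mul_equiv, hHG, Matrix.submatrix_one_equiv])
  have h3 : (H.submatrix (finSumFinEquiv.trans w) (finSumFinEquiv : Fin k ⊕ Fin n ≃ Fin (k + n))).det =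
      ((Equiv.Perm.sign w : ℤ) : A) := by
    have : H.submatrix (finSumFinEquiv.trans w) (finSumFinEquiv : Fin k ⊕ Fin n ≃ Fin (k + n)) =
      (H.submatrix w id).submatrix finSumFinEquiv finSumFinEquiv := rfl
    rw [this, Matrix.det_submatrix_equiv_self, Matrix.det_permute, hdet, mul_one]
  rw [h3] at this
  have e1 : (Matrix.of fun i j : Fin k => h ((w (Fin.castAdd n i) : ℤ) - (j : ℤ))) =
    (H.submatrix (finSumFinEquiv.trans w) (finSumFinEquiv : Fin k ⊕ Fin n ≃ Fin (k + n))).toBlocks₁₁ := by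
    ext i j
    simp [Matrix.toBlocks₁₁, hH]
  have e2 : (Matrix.of fun i j : Fin n => g (((k + i : ℕ) : ℤ) - (w (Fin.natAdd k j) : ℤ))) =
    (G.submatrix (finSumFinEquiv : Fin k ⊕ Fin n ≃ Fin (k + n)) (finSumFinEquiv.trans w)).toBlocks₂₂ := by
    ext i j
    simp [Matrix.toBlocks₂₂, hG]
  rw [e1, e2]
  exact this

lemma dualJT_perm (k n : ℕ) (lam : Fin n → ℕ) (p : Fin k → ℕ) (hl : ∀ i, lam i ≤ k) (hp : ∀ a, p a ≤ n)
    (hlp : ∀ (a : Fin k) (j : Fin n), (j : ℕ) < p a ↔ (a : ℕ) + 1 ≤ lam j) :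
    ∃ w : Equiv.Perm (Fin (k + n)), (∀ i, (w (Fin.castAdd n i) : ℕ) = p i.rev + i) ∧
      (∀ j, (w (Fin.natAdd k j) : ℕ) = k + j - lam j) ∧
      (Equiv.Perm.sign w : ℤ) = ∏ j, (-1) ^ lam j := by
  have pm : ∀ a b : Fin k, a ≤ b → p b ≤ p a := by
    intro a b hab
    by_contra hc
    push Not at hc
    have hn : p a < n := lt_of_lt_of_le hc (hp b)
    have h1 := (hlp b ⟨p a, hn⟩).1 hc
    have h2 := (hlp a ⟨p a, hn⟩).2 (by have : (a : ℕ) ≤ b := hab; omega)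
    exact lt_irrefl _ h2
  have lm : ∀ i j : Fin n, i ≤ j → lam j ≤ lam i := by
    intro i j hij
    by_contra hc
    push Not at hc
    have hn : lam i < k := lt_of_lt_of_le hc (hl j)
    have h1 := (hlp ⟨lam i, hn⟩ j).2 hc
    have h2 := (hlp ⟨lam i, hn⟩ i).1 (lt_of_le_of_lt hij h1)
    simp at h2
  have key : ∀ (i : Fin k) (j : Fin n), (k + (j : ℕ) - lam j < p i.rev + i ↔ (j : ℕ) < p i.rev) ∧
      (p i.rev + i < k + (j : ℕ) - lam j ↔ ¬ (j : ℕ) < p i.rev) := by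
    intro i j
    have h1 := hlp i.rev j
    have h2 := hl j
    rw [Fin.val_rev] at h1
    have := i.2
    constructor <;> constructor <;> intro h <;> omega
  let f : Fin (k + n) → Fin (k + n) := Fin.addCases
    (fun i => ⟨p i.rev + i, by have := hp i.rev; have := i.2; omega⟩)
    (fun j => ⟨k + j - lam j, by have := j.2; omega⟩)
  have f1 : ∀ i, (f (Fin.castAdd n i) : ℕ) = p i.rev + i := by intro i; simp [f]
  have f2 : ∀ j, (f (Fin.natAdd k j) : ℕ) = k + j - lam j := by intro i; simp [f]
  have m1 : ∀ i j : Fin k, i < j → f (Fin.castAdd n i) < f (Fin.castAdd n j) := by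
    intro i j hij
    rw [Fin.lt_def, f1, f1]
    have := pm j.rev i.rev (Fin.rev_le_rev.2 hij.le)
    have : (i : ℕ) < j := hij
    omega
  have m2 : ∀ i j : Fin n, i < j → f (Fin.natAdd k i) < f (Fin.natAdd k j) := by
    intro i j hij
    rw [Fin.lt_def, f2, f2]
    have := lm i j hij.le
    have : (i : ℕ) < j := hij
    have := hl i
    have := hl j
    omega
  have finj : Function.Injective f := by
    intro x y
    refine Fin.addCases (fun i => ?_) (fun i => ?_) x <;> refine Fin.addCases (fun j => ?_) (fun j => ?_) y
    · intro h
      rcases lt_trichotomy i j with h1 | h1 | h1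
      · exact absurd h (m1 _ _ h1).ne
      · rw [h1]
      · exact absurd h (m1 _ _ h1).ne'
    · intro h
      have h' := congrArg Fin.val h
      rw [f1, f2] at h'
      have := key i j
      omega
    · intro h
      have h' := congrArg Fin.val h
      rw [f1, f2] at h'
      have := key j i
      omega
    · intro h
      rcases lt_trichotomy i j with h1 | h1 | h1
      · exact absurd h (m2 _ _ h1).ne
      · rw [h1]
      · exact absurd h (m2 _ _ h1).ne'
  refine ⟨Equiv.ofBijective f (Finite.injective_iff_bijective.1 finj), f1, f2, ?_⟩
  rw [Equiv.Perm.sign_eq_prod_prod_Ioi]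
  have hI : ∀ (i : Fin (k + n)) (F : Fin (k + n) → ℤˣ), ∏ j ∈ Finset.Ioi i, F j =
      ∏ j, if i < j then F j else 1 := by
    intro i F
    rw [← Finset.prod_filter]
    congr 1
    ext; simp
  simp only [hI, Equiv.ofBijective_apply]
  rw [Fin.prod_univ_add]
  simp only [Fin.prod_univ_add]
  have c1 : ∀ i j : Fin k, (if Fin.castAdd n i < Fin.castAdd n j then
      (if f (Fin.castAdd n i) < f (Fin.castAdd n j) then (1 : ℤˣ) else -1) else 1) = 1 := by
    intro i j
    split_ifs with h1 h2
    · rfl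
    · exact absurd (m1 i j (by rw [Fin.lt_def] at h1 ⊢; simp only [Fin.val_castAdd] at h1; omega)) h2
    · rfl
  have c2 : ∀ i j : Fin n, (if Fin.natAdd k i < Fin.natAdd k j then
      (if f (Fin.natAdd k i) < f (Fin.natAdd k j) then (1 : ℤˣ) else -1) else 1) = 1 := by
    intro i j
    split_ifs with h1 h2
    · rfl
    · exact absurd (m2 i j (by rw [Fin.lt_def] at h1 ⊢; simp only [Fin.val_natAdd] at h1; omega)) h2
    · rfl
  have c3 : ∀ (i : Fin n) (j : Fin k), (if Fin.natAdd k i < Fin.castAdd n j then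
      (if f (Fin.natAdd k i) < f (Fin.castAdd n j) then (1 : ℤˣ) else -1) else 1) = 1 := by
    intro i j
    rw [if_neg]
    rw [Fin.lt_def]; simp; omega
  have c4 : ∀ (i : Fin k) (j : Fin n), (if Fin.castAdd n i < Fin.natAdd k j then
      (if f (Fin.castAdd n i) < f (Fin.natAdd k j) then (1 : ℤˣ) else -1) else 1) =
      if (i.rev : ℕ) + 1 ≤ lam j then -1 else 1 := by
    intro i j
    rw [if_pos (by rw [Fin.lt_def]; simp; omega)]
    simp only [Fin.lt_def, f1, f2, (key i j).2, hlp, ite_not]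
  simp only [c1, c2, c3, c4, Finset.prod_const_one, mul_one, one_mul]
  rw [Finset.prod_comm]
  push_cast
  apply Finset.prod_congr rfl
  intro j _
  rw [← Equiv.prod_comp (Fin.revPerm : Equiv.Perm (Fin k))]
  simp only [Fin.revPerm_apply, Fin.rev_rev]
  have : ∀ x : Fin k, (((if (x : ℕ) + 1 ≤ lam j then -1 else 1 : ℤˣ)) : ℤ) =
     if (x : ℕ) < lam j then -1 else 1 := by
    intro x
    split_ifs <;> first | rfl | omega
  simp only [this]
  rw [Fin.prod_univ_eq_prod_range (fun x : ℕ => if x < lam j then (-1 : ℤ) else 1) k,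
    ← Finset.prod_filter, Finset.prod_const]
  congr 1
  have : (Finset.range k).filter (fun x => x < lam j) = Finset.range (lam j) := by
    ext x; have := hl j; simp; omega
  rw [this, Finset.card_range]

/-- dual Jacobi-Trudi -/
lemma dualJT {A : Type*} [CommRing A] (k n : ℕ) (h e : ℤ → A) (hneg : ∀ m < 0, h m = 0)
    (eneg : ∀ m < 0, e m = 0) (h0 : h 0 = 1)
    (he : ∀ m : ℕ, ∑ p ∈ Finset.HasAntidiagonal.antidiagonal m, h p.1 * ((-1) ^ p.2 * e p.2) =
      if m = 0 then 1 else 0)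
    (lam : Fin n → ℕ) (p : Fin k → ℕ) (hl : ∀ i, lam i ≤ k) (hp : ∀ a, p a ≤ n)
    (hlp : ∀ (a : Fin k) (j : Fin n), (j : ℕ) < p a ↔ (a : ℕ) + 1 ≤ lam j) :
    (Matrix.of fun i j : Fin k => h ((p i : ℤ) - (i : ℕ) + (j : ℕ))).det =
    (Matrix.of fun i j : Fin n => e ((lam i : ℤ) - (i : ℕ) + (j : ℕ))).det := by
  obtain ⟨w, w1, w2, w3⟩ := dualJT_perm k n lam p hl hp hlp
  have := compl_minor k n h (fun m => (-1) ^ m.natAbs * e m) hneg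
    (by intro m hm; simp [eneg m hm]) h0 (by simpa using he) w
  rw [w3] at this
  have a1 : (Matrix.of fun i j : Fin k => h ((p i : ℤ) - (i : ℕ) + (j : ℕ))).det =
      (Matrix.of fun i j : Fin k => h ((w (Fin.castAdd n i) : ℤ) - (j : ℤ))).det := by
    rw [← Matrix.det_submatrix_equiv_self Fin.revPerm]
    congr 1
    ext i j
    simp only [Matrix.submatrix_apply, Matrix.of_apply, Fin.revPerm_apply, Fin.val_rev]
    congr 1
    have := w1 i
    have := i.2
    have := j.2
    omega
  rw [a1, this]
  have a2 : (Matrix.of fun i j : Fin n => (-1) ^ (((k + i : ℕ) : ℤ) - (w (Fin.natAdd k j) : ℤ)).natAbs *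
      e (((k + i : ℕ) : ℤ) - (w (Fin.natAdd k j) : ℤ))) =
      Matrix.of fun i j : Fin n => (-1 : A) ^ ((i : ℕ)) * (Matrix.of fun i j : Fin n =>
         (-1 : A) ^ ((j : ℕ) + lam j) *
          (Matrix.of fun i j : Fin n => e ((lam i : ℤ) - (i : ℕ) + (j : ℕ))).transpose i j) i j := by
    ext i j
    simp only [Matrix.of_apply, Matrix.transpose_apply]
    have h2 := w2 j
    have h3 := hl j
    have h4 : ((k + i : ℕ) : ℤ) - (w (Fin.natAdd k j) : ℤ) = (lam j : ℤ) - (j : ℕ) + (i : ℕ) := by omega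
    rw [h4, ← mul_assoc, ← pow_add]
    congr 1
    rw [neg_one_pow_eq_pow_mod_two, neg_one_pow_eq_pow_mod_two (n := (i : ℕ) + _)]
    congr 1
    omega
  rw [a2, Matrix.det_mul_column, Matrix.det_mul_row, Matrix.det_transpose]
  push_cast
  simp only [← mul_assoc, ← Finset.prod_mul_distrib, ← pow_add]
  rw [Finset.prod_eq_one, one_mul]
  intro i _
  exact Even.neg_one_pow ⟨lam i + i, by ring⟩
end FR

namespace FR

/-- abstract data of sequences `h`, `e` in a ring -/
structure Dat (A : Type*) [CommRing A] (n k : ℕ) where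
  h : ℤ → A
  e : ℤ → A
  hneg : ∀ m < 0, h m = 0
  eneg : ∀ m < 0, e m = 0
  h0 : h 0 = 1
  he : ∀ m : ℕ, ∑ p ∈ Finset.HasAntidiagonal.antidiagonal m, h p.1 * ((-1) ^ p.2 * e p.2) =
      if m = 0 then 1 else 0
  ebig : ∀ m : ℤ, k < m → e m = 0
  hn : h n = 1
  hbig : ∀ m : ℕ, n < m → m < n + k → h m = 0
  n1 : 1 ≤ n
  k1 : 1 ≤ k

namespace Dat
variable {A : Type*} [CommRing A] {n k : ℕ} (D : Dat A n k)

lemma e0 : D.e 0 = 1 := by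
  have := D.he 0
  simpa [D.h0] using this

/-- companion matrix -/
def At : Matrix (Fin n) (Fin n) A := Matrix.of fun i j =>
  if (j : ℕ) + 1 < n then (if (i : ℕ) = j + 1 then 1 else 0)
  else (-1) ^ (n - 1 - (i : ℕ)) * D.h ((n : ℤ) - (i : ℕ))

/-- rows -/
def Rt (a : ℕ) : Fin n → A :=
  Matrix.vecMul (fun j : Fin n => if (j : ℕ) + 1 = n then 1 else 0) (D.At ^ a)

lemma Rt_succ (a : ℕ) : D.Rt (a + 1) = Matrix.vecMul (D.Rt a) D.At := by
  rw [Rt, Rt, pow_succ, Matrix.vecMul_vecMul]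

lemma vecMul_At_lt (v : Fin n → A) (j : Fin n) (hj : (j : ℕ) + 1 < n) :
    Matrix.vecMul v D.At j = v ⟨j + 1, hj⟩ := by
  rw [Matrix.vecMul, dotProduct, Finset.sum_eq_single ⟨(j : ℕ) + 1, hj⟩]
  · simp [At, hj]
  · intro b _ hb
    have : (b : ℕ) ≠ j + 1 := fun h => hb (Fin.ext h)
    simp [At, hj, this]
  · simp

lemma vecMul_At_last (v : Fin n → A) (j : Fin n) (hj : ¬ (j : ℕ) + 1 < n) :
    Matrix.vecMul v D.At j = ∑ i : Fin n, v i * ((-1) ^ (n - 1 - (i : ℕ)) * D.h ((n : ℤ) - (i : ℕ))) := by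
  simp [Matrix.vecMul, dotProduct, At, hj]

/-- the truncated relation -/
lemma rel_trunc (a : ℕ) (ha : a + 1 < n + k) :
    ∑ i : Fin n, D.e ((a : ℤ) - (n - 1) + (i : ℕ)) * ((-1) ^ (n - 1 - (i : ℕ)) * D.h ((n : ℤ) - (i : ℕ)))
      = D.e (a + 1) := by
  have h1 := D.he (a + 1)
  rw [Finset.Nat.sum_antidiagonal_eq_sum_range_succ_mk] at h1
  simp only [Nat.succ_ne_zero, if_false] at h1
  rw [Finset.sum_range_succ'] at h1
  have h2 : ∑ i : Fin n, D.e ((a : ℤ) - (n - 1) + (i : ℕ)) *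
      ((-1) ^ (n - 1 - (i : ℕ)) * D.h ((n : ℤ) - (i : ℕ))) =
      ∑ s ∈ Finset.range n, D.e ((a : ℤ) - s) * ((-1) ^ s * D.h ((s : ℤ) + 1)) := by
    rw [Finset.sum_range, ← Equiv.sum_comp Fin.revPerm]
    apply Finset.sum_congr rfl
    intro i _
    have := i.2
    simp only [Fin.revPerm_apply, Fin.val_rev]
    congr 2
    · omega
    · congr 1; omega
    · congr 1; omega
  have h3 : ∑ s ∈ Finset.range (a + 1), D.h (((s + 1 : ℕ)) : ℤ) *
      ((-1) ^ (a + 1 - (s + 1)) * D.e ((a + 1 - (s + 1) : ℕ) : ℤ)) =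
      ∑ s ∈ Finset.range n, (-1) ^ a * (D.e ((a : ℤ) - s) * ((-1) ^ s * D.h ((s : ℤ) + 1))) := by
    have e1 : ∑ s ∈ Finset.range (a + 1), D.h (((s + 1 : ℕ)) : ℤ) *
      ((-1) ^ (a + 1 - (s + 1)) * D.e ((a + 1 - (s + 1) : ℕ) : ℤ)) =
      ∑ s ∈ Finset.range (a + 1), (-1) ^ a * (D.e ((a : ℤ) - s) * ((-1) ^ s * D.h ((s : ℤ) + 1))) := by
      apply Finset.sum_congr rfl
      intro s hs
      rw [Finset.mem_range] at hs
      have hs' : s ≤ a := by omega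
      obtain ⟨t, rfl⟩ := Nat.exists_eq_add_of_le hs'
      have : s + t + 1 - (s + 1) = t := by omega
      rw [this]
      have : ((s + t : ℕ) : ℤ) - s = t := by push_cast; ring
      rw [this, pow_add]
      push_cast
      have : ((-1 : A) ^ s) * (-1) ^ s = 1 := by rw [← mul_pow]; simp
      linear_combination (-D.h (↑s + 1) * (-1) ^ t * D.e t) * this
    rw [e1]
    have z1 : ∀ s, n ≤ s → s < a + 1 → D.h ((s : ℤ) + 1) = 0 := by
      intro s h1 h2
      have := D.hbig (s + 1) (by omega) (by omega)
      push_cast at this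
      exact this
    have z2 : ∀ s, a + 1 ≤ s → D.e ((a : ℤ) - s) = 0 := by
      intro s h1
      exact D.eneg _ (by omega)
    rcases le_total n (a + 1) with h | h
    · symm
      apply Finset.sum_subset (Finset.range_mono h)
      intro s h1 h2
      simp only [Finset.mem_range] at h1 h2
      rw [z1 s (by omega) h1]; simp
    · apply Finset.sum_subset (Finset.range_mono h)
      intro s h1 h2
      simp only [Finset.mem_range] at h1 h2
      rw [z2 s (by omega)]; simp
  rw [h2]
  rw [h3, ← Finset.mul_sum] at h1
  have hh : ((-1 : A) ^ a) * (-1) ^ a = 1 := by rw [← mul_pow]; simp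
  simp only [Nat.cast_zero, D.h0, Nat.sub_zero, pow_succ] at h1
  push_cast at h1
  linear_combination (-1) ^ a * h1 - (∑ s ∈ Finset.range n, D.e ((a : ℤ) - s) * ((-1) ^ s * D.h ((s : ℤ) + 1))) * hh
    + D.e (a + 1) * hh

lemma Rt_eq (a : ℕ) (ha : a < n + k) (j : Fin n) : D.Rt a j = D.e ((a : ℤ) - (n - 1) + (j : ℕ)) := by
  induction a generalizing j with
  | zero =>
    simp only [Rt, pow_zero, Matrix.vecMul_one]
    split_ifs with h
    · rw [← D.e0]; congr 1; omega
    · rw [D.eneg]; have := j.2; omega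
  | succ a ih =>
    rw [Rt_succ]
    by_cases hj : (j : ℕ) + 1 < n
    · rw [vecMul_At_lt _ _ _ hj, ih (by omega)]
      congr 1; push_cast; ring
    · rw [vecMul_At_last _ _ _ hj]
      simp only [ih (by omega)]
      rw [D.rel_trunc a ha]
      congr 1
      have := j.2
      push_cast
      omega

lemma Rt_N : ∃ x : A, ∀ a, D.Rt (a + (n + k)) = x • D.Rt a := by
  have hN : ∃ x : A, D.Rt (n + k) = x • D.Rt 0 := by
    have hnk : n + k = (n + k - 1) + 1 := by have := D.n1; omega
    refine ⟨∑ i : Fin n, D.Rt (n + k - 1) i * ((-1) ^ (n - 1 - (i : ℕ)) * D.h ((n : ℤ) - (i : ℕ))), ?_⟩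
    rw [hnk, Rt_succ]
    ext j
    simp only [Pi.smul_apply, smul_eq_mul]
    rw [D.Rt_eq 0 (by have := D.n1; omega)]
    by_cases hj : (j : ℕ) + 1 < n
    · rw [vecMul_At_lt _ _ _ hj, D.Rt_eq _ (by omega), D.ebig, D.eneg, mul_zero]
      · omega
      · have := D.n1
        have : ((n + k - 1 : ℕ) : ℤ) = n + k - 1 := by omega
        rw [this]; push_cast; omega
    · rw [vecMul_At_last _ _ _ hj]
      have : ((0 : ℕ) : ℤ) - ((n : ℤ) - 1) + (j : ℕ) = 0 := by have := j.2; omega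
      rw [this, D.e0, mul_one]
      rfl
  obtain ⟨x, hx⟩ := hN
  refine ⟨x, fun a => ?_⟩
  have : ∀ b, D.Rt (b + a) = Matrix.vecMul (D.Rt b) (D.At ^ a) := by
    intro b
    simp only [Rt]
    rw [pow_add, Matrix.vecMul_vecMul]
  rw [add_comm, this, hx, Matrix.smul_vecMul, ← this, zero_add]

/-- determinants -/
def Dt (x : Fin n → ℕ) : A := (Matrix.of fun i : Fin n => D.Rt (x i + (n - 1 - (i : ℕ)))).det

lemma Dt_eq (x : Fin n → ℕ) (hx : ∀ i, x i ≤ k) :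
    D.Dt x = (Matrix.of fun i j : Fin n => D.e ((x i : ℤ) - (i : ℕ) + (j : ℕ))).det := by
  rw [Dt]
  congr 1
  ext i j
  have := hx i
  have := i.2
  have := D.n1
  have := D.k1
  rw [Matrix.of_apply, Matrix.of_apply, D.Rt_eq _ (by omega)]
  congr 1
  omega

lemma Dt_zero_of_eq (x : Fin n → ℕ) (i j : Fin n) (hij : i ≠ j)
    (hx : x i + (n - 1 - (i : ℕ)) = x j + (n - 1 - (j : ℕ))) : D.Dt x = 0 := by
  apply Matrix.det_zero_of_row_eq hij
  ext l
  simp [hx]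

lemma Dt_zero_of_eqN (x : Fin n → ℕ) (i j : Fin n) (hij : i ≠ j)
    (hx : x i + (n - 1 - (i : ℕ)) = x j + (n - 1 - (j : ℕ)) + (n + k)) : D.Dt x = 0 := by
  obtain ⟨c, hc⟩ := D.Rt_N
  have h1 : (Matrix.of fun i : Fin n => D.Rt (x i + (n - 1 - (i : ℕ)))) =
      ((Matrix.of fun i : Fin n => D.Rt (x i + (n - 1 - (i : ℕ)))).updateRow i
        (c • D.Rt (x j + (n - 1 - (j : ℕ))))) := by
    ext a b
    rw [Matrix.updateRow_apply]
    split_ifs with h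
    · rw [h, ← hc, ← hx]; rfl
    · rfl
  rw [Dt, h1, Matrix.det_updateRow_smul]
  have : (Matrix.of fun i : Fin n => D.Rt (x i + (n - 1 - (i : ℕ)))).updateRow i
        (D.Rt (x j + (n - 1 - (j : ℕ)))) =
     (Matrix.of fun i : Fin n => D.Rt (x i + (n - 1 - (i : ℕ)))).updateRow i
        ((Matrix.of fun i : Fin n => D.Rt (x i + (n - 1 - (i : ℕ)))) j) := rfl
  rw [this, Matrix.det_updateRow_eq_zero hij.symm]
  simp

/-- Pieri coefficients -/
def pc (r : ℕ) : A :=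
  (((1 : Matrix (Fin n) (Fin n) (Polynomial A)) + (Polynomial.X : Polynomial A) • D.At.map Polynomial.C).det).coeff r

lemma pieri0 (x : Fin n → ℕ) (r : ℕ) :
    ∑ J ∈ Finset.powersetCard r (Finset.univ : Finset (Fin n)),
      D.Dt (fun i => x i + if i ∈ J then 1 else 0) = D.pc r * D.Dt x := by
  set M : Matrix (Fin n) (Fin n) A := (Matrix.of fun i : Fin n => D.Rt (x i + (n - 1 - (i : ℕ)))) with hM
  have h1 : (M.map Polynomial.C *
      (1 + (Polynomial.X : Polynomial A) • D.At.map Polynomial.C)).det =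
      Polynomial.C (D.Dt x) *
      ((1 : Matrix (Fin n) (Fin n) (Polynomial A)) + (Polynomial.X : Polynomial A) • D.At.map Polynomial.C).det := by
    rw [Matrix.det_mul, Dt]
    congr 1
    exact (RingHom.map_det (Polynomial.C : A →+* Polynomial A) M).symm
  have h2 : (M.map Polynomial.C *
      (1 + (Polynomial.X : Polynomial A) • D.At.map Polynomial.C)) =
      (((Polynomial.X : Polynomial A) • (M * D.At).map Polynomial.C : Matrix _ _ _) + M.map Polynomial.C) := by
    rw [mul_add, mul_one, Matrix.mul_smul, Matrix.map_mul, add_comm]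
  rw [h2] at h1
  have h3 := (Matrix.detRowAlternating (n := Fin n) (R := Polynomial A)).toMultilinearMap.map_add_univ
    (fun i j => Polynomial.X * Polynomial.C ((M * D.At) i j)) (fun i j => Polynomial.C (M i j))
  have h4 : ∀ J : Finset (Fin n), (Matrix.detRowAlternating (n := Fin n) (R := Polynomial A)).toMultilinearMap
      (J.piecewise (fun i j => Polynomial.X * Polynomial.C ((M * D.At) i j)) (fun i j => Polynomial.C (M i j)))
      = Polynomial.X ^ J.card * Polynomial.C (D.Dt (fun i => x i + if i ∈ J then 1 else 0)) := by
    intro J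
    have e1 : (Polynomial.C (D.Dt (fun i => x i + if i ∈ J then 1 else 0)) : Polynomial A) =
      ((Matrix.of fun i : Fin n => D.Rt ((x i + if i ∈ J then 1 else 0) + (n - 1 - (i : ℕ)))).map Polynomial.C).det :=
      RingHom.map_det (Polynomial.C : A →+* Polynomial A) _
    rw [e1]
    have e2 : (Polynomial.X : Polynomial A) ^ J.card = ∏ i : Fin n, if i ∈ J then Polynomial.X else 1 := by
      rw [Finset.prod_ite]
      simp
    rw [e2, ← Matrix.det_mul_column]
    show Matrix.det _ = _
    congr 1
    ext1 i j
    by_cases hi : i ∈ J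
    · simp only [Finset.piecewise, hi, if_true, Matrix.of_apply, Matrix.map_apply]
      congr 2
      have : x i + 1 + (n - 1 - (i : ℕ)) = x i + (n - 1 - (i : ℕ)) + 1 := by ring
      rw [this, Rt_succ]
      rfl
    · simp only [Finset.piecewise, hi, if_false, Matrix.of_apply, Matrix.map_apply, one_mul, add_zero]
      rfl
  have h5 : (((Polynomial.X : Polynomial A) • (M * D.At).map Polynomial.C + M.map Polynomial.C : Matrix _ _ _)).det =
      ∑ J : Finset (Fin n),
        Polynomial.X ^ J.card * Polynomial.C (D.Dt (fun i => x i + if i ∈ J then 1 else 0)) := by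
    simp only [h4] at h3
    rw [← h3]
    rfl
  rw [h5] at h1
  have h6 := congrArg (fun q => Polynomial.coeff q r) h1
  simp only [Polynomial.finset_sum_coeff, Polynomial.coeff_C_mul, Polynomial.coeff_mul_C, Polynomial.coeff_X_pow] at h6
  rw [mul_comm, pc, ← h6, Finset.powersetCard_eq_filter, Finset.sum_filter]
  simp only [Finset.powerset_univ]
  apply Finset.sum_congr rfl
  intro J _
  by_cases hJ : J.card = r
  · simp [hJ]
  · simp [hJ, Ne.symm hJ]

lemma Dt_zero : D.Dt (fun _ => 0) = 1 := by
  rw [D.Dt_eq _ (by simp), Matrix.det_of_upperTriangular]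
  · simp [D.e0]
  · intro i j hij
    have : (j : ℕ) < i := hij
    rw [Matrix.of_apply, D.eneg]
    push_cast; omega

lemma Dt_col (r : ℕ) (hr : r ≤ n) : D.Dt (fun i => if (i : ℕ) < r then 1 else 0) = D.h r := by
  have hk := D.k1
  rw [D.Dt_eq _ (by intro i; split_ifs <;> omega)]
  rw [← dualJT k n D.h D.e D.hneg D.eneg D.h0 D.he (fun i : Fin n => if (i : ℕ) < r then 1 else 0)
    (fun a => if (a : ℕ) = 0 then r else 0)]
  · rw [Matrix.det_of_upperTriangular]
    · rw [Finset.prod_eq_single ⟨0, hk⟩]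
      · simp
      · intro b _ hb
        have : (b : ℕ) ≠ 0 := fun h => hb (Fin.ext h)
        simp [this, D.h0]
      · simp
    · intro i j hij
      have : (j : ℕ) < i := hij
      rw [Matrix.of_apply, if_neg (by omega), D.hneg]
      push_cast; omega
  · intro i; split_ifs <;> omega
  · intro i; split_ifs <;> omega
  · intro i j
    by_cases h1 : (i : ℕ) = 0 <;> by_cases h2 : (j : ℕ) < r <;> simp [h1, h2]

lemma pc_eq (r : ℕ) (hr : r ≤ n) : D.pc r = D.h r := by
  have h1 := D.pieri0 (fun _ => 0) r
  rw [D.Dt_zero, mul_one] at h1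
  rw [← h1, ← D.Dt_col r hr]
  rw [Finset.sum_eq_single (Finset.univ.filter fun i : Fin n => (i : ℕ) < r)]
  · simp
  · intro J hJ hne
    rw [Finset.mem_powersetCard] at hJ
    by_contra hc
    have hd : ∀ i j : Fin n, (i : ℕ) + 1 = j → j ∈ J → i ∈ J := by
      intro i j hij hj
      by_contra hi
      apply hc
      apply D.Dt_zero_of_eq _ i j (by intro h; rw [h] at hij; omega)
      simp only [hi, hj, if_true, if_false]
      have := j.2
      omega
    have hd2 : ∀ d : ℕ, ∀ i j : Fin n, (i : ℕ) + d = j → j ∈ J → i ∈ J := by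
      intro d
      induction d with
      | zero => intro i j hij hj; have : i = j := Fin.ext (by omega); rwa [this]
      | succ d ih =>
        intro i j hij hj
        have := j.2
        exact hd i ⟨i + 1, by omega⟩ rfl (ih ⟨i + 1, by omega⟩ j (by simp; omega) hj)
    apply hne
    symm
    have hcard : (Finset.univ.filter fun i : Fin n => (i : ℕ) < r).card = r := by
      rw [Fin.card_filter_val_lt]; omega
    by_cases hsub : (Finset.univ.filter fun i : Fin n => (i : ℕ) < r) ⊆ J
    · exact Finset.eq_of_subset_of_card_le hsub (by rw [hJ.2, hcard])
    · exfalso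
      rw [Finset.not_subset] at hsub
      obtain ⟨i, hi, hiJ⟩ := hsub
      rw [Finset.mem_filter] at hi
      have h2 : J ⊆ Finset.univ.filter fun j : Fin n => (j : ℕ) < i := by
        intro j hj
        simp only [Finset.mem_filter, Finset.mem_univ, true_and]
        by_contra hge
        exact hiJ (hd2 (j - i) i j (by omega) hj)
      have := Finset.card_le_card h2
      rw [hJ.2, Fin.card_filter_val_lt] at this
      omega
  · intro h
    exfalso
    apply h
    rw [Finset.mem_powersetCard, Fin.card_filter_val_lt]
    exact ⟨Finset.subset_univ _, by omega⟩

lemma pieri (x : Fin n → ℕ) (r : ℕ) (hr : r ≤ n) :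
    ∑ J ∈ Finset.powersetCard r (Finset.univ : Finset (Fin n)),
      D.Dt (fun i => x i + if i ∈ J then 1 else 0) = D.h r * D.Dt x := by
  rw [D.pieri0, D.pc_eq r hr]

lemma Dt_add_one (x : Fin n → ℕ) : D.Dt (fun i => x i + 1) = D.Dt x := by
  have := D.pieri x n le_rfl
  rw [D.hn, one_mul] at this
  rw [← this]
  have : Finset.powersetCard n (Finset.univ : Finset (Fin n)) = {Finset.univ} := by
    have := Finset.powersetCard_self (Finset.univ : Finset (Fin n))
    rwa [Finset.card_fin] at this
  rw [this]
  simp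

lemma Dt_add (x : Fin n → ℕ) (c : ℕ) : D.Dt (fun i => x i + c) = D.Dt x := by
  induction c with
  | zero => rfl
  | succ c ih => rw [← ih, ← D.Dt_add_one fun i => x i + c]; rfl

end Dat
end FR

namespace FR

lemma pad_le {n k : ℕ} (σ : PartBox (n - 1) k) (j : ℕ) : padded (partVal σ) j ≤ k := by
  unfold padded
  split_ifs with h
  · exact Nat.lt_succ_iff.1 (σ.1 ⟨j, h⟩).2
  · omega

lemma pad_anti {n k : ℕ} (σ : PartBox (n - 1) k) (i j : ℕ) (hij : i ≤ j) :
    padded (partVal σ) j ≤ padded (partVal σ) i := by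
  unfold padded
  split_ifs with h1 h2
  · exact σ.2 _ _ hij
  · omega
  · omega
  · omega

lemma pad_last {n k : ℕ} (σ : PartBox (n - 1) k) (j : ℕ) (hj : n - 1 ≤ j) : padded (partVal σ) j = 0 := by
  unfold padded
  rw [dif_neg (by omega)]

lemma pad_ext {n k : ℕ} (σ τ : PartBox (n - 1) k)
    (h : ∀ j, j < n - 1 → padded (partVal σ) j = padded (partVal τ) j) : σ = τ := by
  apply Subtype.ext
  funext i
  apply Fin.ext
  have := h i i.2
  simpa [padded, partVal, i.2] using this

lemma cfg_inj {n k : ℕ} [NeZero n] (hn : 2 ≤ n) (σ τ : PartBox (n - 1) k) (h : cfgOf n k σ = cfgOf n k τ) :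
    σ = τ := by
  apply pad_ext
  intro j
  induction j with
  | zero =>
    intro _
    have := congrFun h 0
    simp only [cfgOf, ZMod.val_zero, if_true] at this
    have := pad_le σ 0
    have := pad_le τ 0
    omega
  | succ j ih =>
    intro hj
    have h1 := congrFun h ((j + 1 : ℕ) : ZMod n)
    have hv : ((j + 1 : ℕ) : ZMod n).val = j + 1 := ZMod.val_cast_of_lt (by omega)
    rw [cfgOf, cfgOf, hv] at h1
    simp only [Nat.succ_ne_zero, if_false, Nat.add_sub_cancel] at h1
    have := ih (by omega)
    have := pad_anti σ j (j + 1) (by omega)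
    have := pad_anti τ j (j + 1) (by omega)
    omega

lemma toBasis_cfg {n k : ℕ} [NeZero n] (hn : 2 ≤ n) (σ : PartBox (n - 1) k) (m : ZMod n → ℕ)
    (h : cfgOf n k σ = m) (r : ℤ) : toBasis ℤ n k m r = Finsupp.single σ r := by
  unfold toBasis
  rw [Finset.sum_eq_single σ]
  · rw [if_pos h]
  · intro b _ hb
    rw [if_neg]
    intro h'
    exact hb (cfg_inj hn _ _ (h'.trans h.symm))
  · simp

lemma aOp_single {n k : ℕ} [NeZero n] (σ : PartBox (n - 1) k) (i : ZMod n) :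
    aOp ℤ n k 1 i (Finsupp.single σ 1) = if cfgOf n k σ i = 0 then 0
    else
      toBasis ℤ n k
        (fun c => cfgOf n k σ c - (Pi.single i 1 : ZMod n → ℕ) c +
          (Pi.single (i + 1) 1 : ZMod n → ℕ) c) 1 := by
  simp [aOp]

lemma aOp_step {n k : ℕ} [NeZero n] (hn : 2 ≤ n) (σ : PartBox (n - 1) k) (i : ZMod n)
    (hc : cfgOf n k σ i ≠ 0) : ∃ (σ' : PartBox (n - 1) k) (c : ℕ),
      aOp ℤ n k 1 i (Finsupp.single σ 1) = Finsupp.single σ' 1 ∧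
      ∀ j < n, padded (partVal σ) j + (if j = i.val then 1 else 0) = padded (partVal σ') j + c := by
  have hi : i.val < n := ZMod.val_lt i
  set L := padded (partVal σ) with hL
  have Lle : ∀ j, L j ≤ k := pad_le σ
  have Lan : ∀ i j, i ≤ j → L j ≤ L i := pad_anti σ
  have Lla : ∀ j, n - 1 ≤ j → L j = 0 := pad_last σ
  have hcf : (i.val = 0 → L 0 < k) ∧ (i.val ≠ 0 → L i.val < L (i.val - 1)) := by
    unfold cfgOf at hc
    rw [← hL] at hc
    have := Lle 0
    constructor
    · intro h; rw [if_pos h] at hc; omega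
    · intro h; rw [if_neg h] at hc; omega
  set c := if i.val = n - 1 then 1 else 0 with hcdef
  have hcc : (i.val = n - 1 ∧ c = 1) ∨ (i.val ≠ n - 1 ∧ c = 0) := by
    rw [hcdef]; split_ifs with h <;> simp [h]
  let L' : ℕ → ℕ := fun j => L j + (if j = i.val then 1 else 0) - c
  have hL1 : ∀ j < n, c ≤ L j + (if j = i.val then 1 else 0) := by
    intro j hj
    have := Lan j (i.val - 1)
    have := hcf.2
    split_ifs <;> omega
  have hL2 : ∀ j < n, L' j ≤ k := by
    intro j hj
    have h1 := Lle j
    have h2 := Lle (i.val - 1)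
    have h3 := hcf.1
    have h4 := hcf.2
    simp only [L']
    split_ifs with h
    · by_cases h0 : i.val = 0
      · rw [h, h0]; have := h3 h0; omega
      · rw [h]; have := h4 h0; omega
    · omega
  have hL3 : ∀ a b, a ≤ b → L' b ≤ L' a := by
    intro a b hab
    have h1 := Lan a b hab
    have h3 := hcf.1
    have h4 := hcf.2
    simp only [L']
    by_cases hb : b = i.val
    · by_cases ha : a = i.val
      · rw [hb, ha]
      · rw [if_pos hb, if_neg ha]
        have h0 : i.val ≠ 0 := by omega
        have := h4 h0
        have := Lan a (i.val - 1) (by omega)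
        rw [hb]; omega
    · rw [if_neg hb]; split_ifs <;> omega
  let σ' : PartBox (n - 1) k := ⟨fun j => ⟨L' j, Nat.lt_succ_of_le (hL2 j (by omega))⟩, fun a b hab => hL3 a b hab⟩
  have hP : ∀ j < n, padded (partVal σ') j = L' j := by
    intro j hj
    unfold padded
    split_ifs with h
    · rfl
    · have : j = n - 1 := by omega
      have h2 := Lla j (by omega)
      simp only [L']
      split_ifs <;> omega
  refine ⟨σ', c, ?_, ?_⟩
  · rw [aOp_single, if_neg hc]
    apply toBasis_cfg hn
    funext d
    have hd : d.val < n := ZMod.val_lt d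
    have e1 : (Pi.single i 1 : ZMod n → ℕ) d = if d.val = i.val then 1 else 0 := by
      rw [Pi.single_apply]
      simp only [ZMod.val_injective n |>.eq_iff]
    have hv : (i + 1).val = if i.val = n - 1 then 0 else i.val + 1 := by
      have : Fact (1 < n) := ⟨by omega⟩
      rw [ZMod.val_add, ZMod.val_one]
      split_ifs with h
      · rw [h, Nat.sub_add_cancel (by omega), Nat.mod_self]
      · rw [Nat.mod_eq_of_lt (by omega)]
    have e2 : (Pi.single (i + 1) 1 : ZMod n → ℕ) d =
        if d.val = (if i.val = n - 1 then 0 else i.val + 1) then 1 else 0 := by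
      rw [Pi.single_apply, ← hv]
      simp only [ZMod.val_injective n |>.eq_iff]
    rw [e1, e2, cfgOf, cfgOf, hP 0 (by omega), hP _ (by omega), hP _ hd, ← hL]
    simp only [L']
    generalize d.val = x at *
    generalize i.val = y at *
    have g1 := hcf.1
    have g2 := hcf.2
    have g3 := Lan (x - 1) x (by omega)
    have g4 := Lle 0
    have g5 := Lan (x - 1) (n - 2)
    have g6 := Lan x (n - 2)
    have g7 := Lan 0 (n - 2) (by omega)
    have g8 := Lla x
    have g9 := hL1 x hd
    have g10 := hL1 (x - 1) (by omega)
    have g11 := hL1 0 (by omega)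
    by_cases hx : x = 0
    · subst hx
      by_cases hy : y = 0
      · subst hy
        simp at *
        split_ifs <;> omega
      · have q1 := g2 hy
        rw [if_pos rfl]
        split_ifs at * <;> omega
    · by_cases hy : y = 0
      · subst hy
        by_cases hx1 : x = 1
        · subst hx1; have := g1 rfl; split_ifs at * <;> simp at * <;> omega
        · split_ifs at * <;> omega
      · have q1 := g2 hy
        by_cases hxy : x = y
        · subst hxy; split_ifs at * <;> omega
        · by_cases hxy : x = y + 1
          · subst hxy; simp at *; split_ifs at * <;> omega
          · split_ifs at * <;> omega
  · intro j hj
    rw [hP j hj]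
    have := hL1 j hj
    simp only [L']
    omega

lemma zgap_not_mem {n : ℕ} [NeZero n] (I : Finset (ZMod n)) (hI : I.card < n) : zgap I ∉ I := by
  have h1 : (Finset.univ \ I).Nonempty := by
    rw [Finset.sdiff_nonempty]
    intro h
    have := Finset.card_le_card h
    rw [Finset.card_univ, ZMod.card] at this
    omega
  have h : ((Finset.univ \ I).image ZMod.val).Nonempty := h1.image _
  unfold zgap
  rw [dif_pos h]
  have := Finset.min'_mem _ h
  rw [Finset.mem_image] at this
  obtain ⟨a, ha, hav⟩ := this
  rw [← hav, ZMod.natCast_zmod_val]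
  simpa using ha

/-- partial products -/
def Tp {A : Type*} [Monoid A] (G : ℕ → A) : ℕ → A
  | 0 => 1
  | s + 1 => G s * Tp G s

lemma prod_Tp {A : Type*} [Monoid A] (G : ℕ → A) (n : ℕ) :
    ((List.range n).map fun t => G (n - 1 - t)).prod = Tp G n := by
  induction n with
  | zero => simp [Tp]
  | succ n ih =>
    rw [List.range_succ_eq_map, List.map_cons, List.prod_cons, Tp, ← ih, List.map_map]
    congr 2
    apply List.map_congr_left
    intro t _
    simp only [Function.comp]
    congr 1
    omega

lemma cyc_Tp {n : ℕ} [NeZero n] {A : Type*} [Monoid A] (a : ZMod n → A) (I : Finset (ZMod n)) :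
    cycProdDesc a I = Tp (fun s => if zgap I + (s : ZMod n) ∈ I then a (zgap I + (s : ZMod n)) else 1) n := by
  have hl : (do let a ← List.range n; pure ((a : ℕ) : ZMod n)) = (List.range n).map fun a => ((a : ℕ) : ZMod n) := by
    rw [List.map_eq_flatMap]; rfl
  rw [← prod_Tp, cycProdDesc, hl, List.map_map]
  congr 1
  apply List.map_congr_left
  intro t ht
  rw [List.mem_range] at ht
  simp only [Function.comp]
  have : zgap I - 1 - (t : ZMod n) = zgap I + ((n - 1 - t : ℕ) : ZMod n) := by
    rw [Nat.sub_sub, Nat.cast_sub (by omega)]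
    simp
    ring
  rw [this]

lemma val_sub_lt_succ {n : ℕ} [NeZero n] (g j : ZMod n) (s : ℕ) (hs : s < n) :
    (j - g).val < s + 1 ↔ ((j - g).val < s ∨ j = g + (s : ZMod n)) := by
  have : j = g + (s : ZMod n) ↔ (j - g).val = s := by
    constructor
    · intro h; rw [h, add_sub_cancel_left, ZMod.val_cast_of_lt hs]
    · intro h; rw [← h, ZMod.natCast_zmod_val]; ring
  rw [this]; omega

lemma cyc_action {A : Type*} [CommRing A] {n k : ℕ} [NeZero n] (hn : 2 ≤ n) (D : Dat A n k)
    (φ : HkSp ℤ n k →ₗ[ℤ] A)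
    (hφ : ∀ σ, φ (Finsupp.single σ 1) = D.Dt (fun i => padded (partVal σ) i))
    (I : Finset (ZMod n)) (hI : I.card < n) (σ : PartBox (n - 1) k) :
    φ (cycProdDesc (aOp ℤ n k 1) I (Finsupp.single σ 1)) =
      D.Dt (fun i : Fin n => padded (partVal σ) i + if ((i : ℕ) : ZMod n) ∈ I then 1 else 0) := by
  set g := zgap I with hg
  have hgI : g ∉ I := zgap_not_mem I hI
  rw [cyc_Tp]
  set T := Tp (fun s : ℕ => if g + (s : ZMod n) ∈ I then aOp ℤ n k 1 (g + (s : ZMod n)) else 1) with hT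
  have inv : ∀ s, s ≤ n → (T s (Finsupp.single σ 1) = 0 ∧
      D.Dt (fun i : Fin n => padded (partVal σ) i + if ((i : ℕ) : ZMod n) ∈ I then 1 else 0) = 0) ∨
      ∃ (σ' : PartBox (n - 1) k) (c : ℕ), T s (Finsupp.single σ 1) = Finsupp.single σ' 1 ∧
        ∀ j < n, padded (partVal σ) j +
          (if ((j : ZMod n) ∈ I ∧ ((j : ZMod n) - g).val < s) then 1 else 0) = padded (partVal σ') j + c := by
    intro s
    induction s with
    | zero =>
      intro _
      right
      exact ⟨σ, 0, by simp [hT, Tp], by simp⟩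
    | succ s ih =>
      intro hs
      have hTs : T (s + 1) (Finsupp.single σ 1) =
        (if g + (s : ZMod n) ∈ I then aOp ℤ n k 1 (g + (s : ZMod n)) else 1) (T s (Finsupp.single σ 1)) := by
        rw [hT, Tp]; rfl
      rcases ih (by omega) with ⟨h1, h2⟩ | ⟨σ', c, h1, h2⟩
      · left
        rw [hTs, h1, map_zero]
        exact ⟨rfl, h2⟩
      · rw [hTs, h1]
        by_cases hi : g + (s : ZMod n) ∈ I
        · rw [if_pos hi]
          set i := g + (s : ZMod n) with hidef
          have hiv : i.val < n := ZMod.val_lt i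
          have hs0 : s ≠ 0 := by
            rintro rfl
            apply hgI
            simpa [hidef] using hi
          by_cases hc : cfgOf n k σ' i = 0
          · left
            refine ⟨by rw [aOp_single, if_pos hc], ?_⟩
            have hα : padded (partVal σ) i.val + 1 = padded (partVal σ') i.val + c + 1 := by
              have := h2 i.val hiv
              rw [ZMod.natCast_zmod_val, if_neg] at this
              · omega
              · rintro ⟨_, h⟩
                rw [hidef, add_sub_cancel_left, ZMod.val_cast_of_lt (by omega)] at h
                omega
            have hprev : ∀ j < n, (j : ZMod n) = i - 1 → padded (partVal σ) j +
                (if (j : ZMod n) ∈ I then 1 else 0) = padded (partVal σ') j + c := by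
              intro j hj hji
              rw [← h2 j hj]
              have : ((j : ZMod n) - g).val < s := by
                have : (j : ZMod n) - g = ((s - 1 : ℕ) : ZMod n) := by
                  rw [hji, hidef, Nat.cast_sub (by omega)]; push_cast; ring
                rw [this, ZMod.val_cast_of_lt (by omega)]
                omega
              simp [this]
            by_cases hi0 : i.val = 0
            · rw [cfgOf, if_pos hi0] at hc
              have hk := pad_le σ' 0
              have hp := hprev (n - 1) (by omega) (by
                rw [(ZMod.val_eq_zero i).1 hi0, Nat.cast_sub (by omega)]; simp)
              have hl := pad_last σ' (n - 1) le_rfl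
              apply D.Dt_zero_of_eqN _ ⟨0, by omega⟩ ⟨n - 1, by omega⟩
              · intro h; simp only [Fin.mk.injEq] at h; omega
              · simp only
                rw [hp]
                have : ((0 : ℕ) : ZMod n) ∈ I := by
                  rw [← hi0, ZMod.natCast_zmod_val]; exact hi
                rw [if_pos this]
                rw [hi0] at hα
                omega
            · rw [cfgOf, if_neg hi0] at hc
              have hk := pad_anti σ' (i.val - 1) i.val (by omega)
              have hp := hprev (i.val - 1) (by omega) (by
                rw [Nat.cast_sub (by omega), ZMod.natCast_zmod_val]; simp)
              apply D.Dt_zero_of_eq _ ⟨i.val - 1, by omega⟩ ⟨i.val, hiv⟩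
              · intro h; simp only [Fin.mk.injEq] at h; omega
              · simp only
                rw [hp]
                have : ((i.val : ℕ) : ZMod n) ∈ I := by
                  rw [ZMod.natCast_zmod_val]; exact hi
                rw [if_pos this]
                omega
          · right
            obtain ⟨σ'', c', h3, h4⟩ := aOp_step hn σ' i hc
            refine ⟨σ'', c + c', h3, ?_⟩
            intro j hj
            have h5 := h2 j hj
            have h6 := h4 j hj
            simp only [val_sub_lt_succ _ _ _ (by omega : s < n), ← hidef]
            have hji : (j : ZMod n) = i ↔ j = i.val := by
              constructor
              · intro h; rw [← h, ZMod.val_cast_of_lt hj]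
              · intro h; rw [h, ZMod.natCast_zmod_val]
            simp only [hji]
            by_cases hj2 : j = i.val
            · have hjI : (j : ZMod n) ∈ I := by rw [hji.2 hj2]; exact hi
              have hlt : ¬ ((j : ZMod n) - g).val < s := by
                rw [hji.2 hj2, hidef, add_sub_cancel_left, ZMod.val_cast_of_lt (by omega)]; omega
              rw [if_pos ⟨hjI, Or.inr hj2⟩]
              rw [if_neg (by tauto)] at h5
              rw [if_pos hj2] at h6
              omega
            · simp only [hj2, or_false, if_false] at h6 ⊢
              rw [h5]
              omega
        · right
          rw [if_neg hi]
          refine ⟨σ', c, rfl, ?_⟩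
          intro j hj
          rw [← h2 j hj]
          simp only [val_sub_lt_succ _ _ _ (by omega : s < n)]
          congr 2
          apply propext
          constructor
          · rintro ⟨a, b | b⟩
            · exact ⟨a, b⟩
            · rw [b] at a; exact absurd a hi
          · rintro ⟨a, b⟩; exact ⟨a, Or.inl b⟩
  rcases inv n le_rfl with ⟨h1, h2⟩ | ⟨σ', c, h1, h2⟩
  · rw [h1, h2, map_zero]
  · rw [h1, hφ, ← D.Dt_add _ c]
    congr 1
    funext i
    rw [← h2 i i.2]
    have := ZMod.val_lt (((i : ℕ) : ZMod n) - g)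
    simp [this]

/-- indices -/
def zeq (n : ℕ) [NeZero n] : Fin n ≃ ZMod n where
  toFun j := ((j : ℕ) : ZMod n)
  invFun z := ⟨z.val, ZMod.val_lt z⟩
  left_inv j := Fin.ext (ZMod.val_cast_of_lt j.2)
  right_inv z := ZMod.natCast_zmod_val z

lemma eA_action {A : Type*} [CommRing A] {n k : ℕ} [NeZero n] (hn : 2 ≤ n) (D : Dat A n k)
    (φ : HkSp ℤ n k →ₗ[ℤ] A)
    (hφ : ∀ σ, φ (Finsupp.single σ 1) = D.Dt (fun i => padded (partVal σ) i))
    (t : ℤ) (ht : t < n + k) (v : HkSp ℤ n k) :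
    φ (eAInt ℤ n k 1 t v) = D.h t * φ v := by
  suffices h : φ ∘ₗ (eAInt ℤ n k 1 t) = (LinearMap.mulLeft ℤ (D.h t)) ∘ₗ φ from LinearMap.congr_fun h v
  apply Finsupp.lhom_ext'
  intro σ
  apply LinearMap.ext_ring
  simp only [LinearMap.comp_apply, Finsupp.lsingle_apply, LinearMap.mulLeft_apply]
  unfold eAInt
  split_ifs with h1 h2 h3
  · rw [h1, D.h0]; simp
  · rw [LinearMap.sum_apply, map_sum]
    obtain ⟨r, rfl⟩ := Int.eq_ofNat_of_zero_le (by omega : 0 ≤ t)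
    rw [hφ, ← D.pieri _ r (by omega)]
    symm
    apply Finset.sum_equiv (Equiv.finsetCongr (zeq n))
    · intro J
      simp [Finset.mem_powersetCard]
    · intro J hJ
      rw [Finset.mem_powersetCard] at hJ
      rw [cyc_action hn D φ hφ]
      · congr 1
        funext i
        congr 2
        simp only [Equiv.finsetCongr_apply, Finset.mem_map_equiv, eq_iff_iff]
        have : (zeq n).symm ((i : ℕ) : ZMod n) = i := (zeq n).symm_apply_apply i
        rw [this]
      · simp only [Equiv.finsetCongr_apply, Finset.card_map, hJ.2]
        omega
  · rw [h3, D.hn]; simp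
  · have : D.h t = 0 := by
      by_cases h : t < 0
      · exact D.hneg t h
      · obtain ⟨r, rfl⟩ := Int.eq_ofNat_of_zero_le (by omega : 0 ≤ t)
        exact D.hbig r (by omega) (by omega)
    rw [this]; simp
end FR

namespace FR

lemma list_inter {R R' M M' : Type*} [CommRing R] [CommRing R'] [AddCommGroup M] [AddCommGroup M']
    [Module R M] [Module R' M'] (θ : M →+ M') {ι : Type*} (l : List ι) (f : ι → Module.End R M)
    (g : ι → Module.End R' M') (h : ∀ i ∈ l, ∀ v, θ (f i v) = g i (θ v)) (v : M) :
    θ ((l.map f).prod v) = (l.map g).prod (θ v) := by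
  induction l generalizing v with
  | nil => simp
  | cons a l ih =>
    rw [List.map_cons, List.map_cons, List.prod_cons, List.prod_cons, Module.End.mul_apply,
      Module.End.mul_apply, h a (by simp), ih (fun i hi => h i (by simp [hi]))]

lemma ncDet_inter {R R' M M' : Type*} [CommRing R] [CommRing R'] [AddCommGroup M] [AddCommGroup M']
    [Module R M] [Module R' M'] (θ : M →+ M') {r : ℕ} (f : Fin r → Fin r → Module.End R M)
    (g : Fin r → Fin r → Module.End R' M') (h : ∀ i j v, θ (f i j v) = g i j (θ v)) (v : M) :
    θ (ncDet f v) = ncDet g (θ v) := by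
  unfold ncDet
  rw [LinearMap.sum_apply, LinearMap.sum_apply, map_sum]
  apply Finset.sum_congr rfl
  intro σ _
  rw [Module.End.mul_apply, Module.End.mul_apply, Module.End.intCast_apply, Module.End.intCast_apply,
    map_zsmul, list_inter θ _ _ (fun i => g (σ i) i) (fun i _ => h _ _)]

lemma ncDet_map {A B : Type*} [Ring A] [Ring B] (F : A →+* B) {r : ℕ} (M : Fin r → Fin r → A) :
    ncDet (fun i j => F (M i j)) = F (ncDet M) := by
  unfold ncDet
  rw [map_sum]
  apply Finset.sum_congr rfl
  intro σ _
  rw [map_mul, map_intCast, map_list_prod, List.map_map]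
  rfl

lemma ncDet_comm {A : Type*} [CommRing A] {r : ℕ} (M : Fin r → Fin r → A) :
    ncDet M = (Matrix.of M).det := by
  rw [Matrix.det_apply', ncDet]
  apply Finset.sum_congr rfl
  intro σ _
  rw [Fin.prod_univ_def]
  rfl

lemma transp_lt {n k : ℕ} (σ : PartBox (n - 1) k) (c : ℕ) (a : Fin c) (j : ℕ) :
    j < transpGen (partVal σ) c a ↔ (a : ℕ) + 1 ≤ padded (partVal σ) j := by
  unfold transpGen
  constructor
  · intro h
    by_contra hc
    have : (Finset.univ.filter fun i : Fin (n - 1) => (a : ℕ) + 1 ≤ partVal σ i) ⊆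
        Finset.univ.filter fun i : Fin (n - 1) => (i : ℕ) < j := by
      intro i hi
      simp only [Finset.mem_filter, Finset.mem_univ, true_and] at hi ⊢
      by_contra hge
      have := pad_anti σ j i (by omega)
      have h2 : padded (partVal σ) i = partVal σ i := by simp [padded]
      omega
    have := Finset.card_le_card this
    rw [Fin.card_filter_val_lt] at this
    omega
  · intro h
    have hj : j < n - 1 := by
      by_contra hc
      rw [pad_last σ j (by omega)] at h
      omega
    have : (Finset.univ.filter fun i : Fin (n - 1) => (i : ℕ) < j + 1) ⊆
        (Finset.univ.filter fun i : Fin (n - 1) => (a : ℕ) + 1 ≤ partVal σ i) := by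
      intro i hi
      simp only [Finset.mem_filter, Finset.mem_univ, true_and] at hi ⊢
      have := pad_anti σ i j (by omega)
      have h2 : padded (partVal σ) i = partVal σ i := by simp [padded]
      omega
    have := Finset.card_le_card this
    rw [Fin.card_filter_val_lt] at this
    omega

lemma transp_le {n k : ℕ} (σ : PartBox (n - 1) k) (c : ℕ) (a : Fin c) :
    transpGen (partVal σ) c a ≤ n - 1 := by
  unfold transpGen
  exact (Finset.card_filter_le _ _).trans (by simp)

/-- the elementary functions with integer index -/
def eLamZ (k : ℕ) (t : ℤ) : ↥(MvPolynomial.symmetricSubalgebra (Fin k) ℤ) :=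
  if 0 ≤ t then eLam k t.toNat else 0

lemma hLam_nat (k m : ℕ) : ((hLam k (m : ℤ) : ↥(MvPolynomial.symmetricSubalgebra (Fin k) ℤ)) :
    MvPolynomial (Fin k) ℤ) = MvPolynomial.hsymm (Fin k) ℤ m := by
  simp [hLam]

lemma eLamZ_nat (k m : ℕ) : ((eLamZ k (m : ℤ) : ↥(MvPolynomial.symmetricSubalgebra (Fin k) ℤ)) :
    MvPolynomial (Fin k) ℤ) = MvPolynomial.esymm (Fin k) ℤ m := by
  simp [eLamZ, eLam]

lemma he_Lam (k m : ℕ) : ∑ p ∈ Finset.HasAntidiagonal.antidiagonal m,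
    hLam k p.1 * ((-1) ^ p.2 * eLamZ k p.2) = if m = 0 then 1 else 0 := by
  apply Subtype.ext
  have := he_rel k m
  rw [AddSubmonoidClass.coe_finset_sum]
  simp only [MulMemClass.coe_mul, SubmonoidClass.coe_pow, NegMemClass.coe_neg, OneMemClass.coe_one,
    hLam_nat, eLamZ_nat]
  rw [this]
  split_ifs <;> rfl

/-- the quotient data -/
structure QS (A : Type*) [CommRing A] (n k : ℕ) where
  pi : ↥(MvPolynomial.symmetricSubalgebra (Fin k) ℤ) →+* A
  pis : Function.Surjective pi
  pin : pi (hLam k (n : ℤ)) = 1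
  pib : ∀ j : ℕ, 1 ≤ j → j ≤ k - 1 → pi (hLam k ((n : ℤ) + (j : ℤ))) = 0
  phi : HkSp ℤ n k →ₗ[ℤ] A
  phis : ∀ σ, phi (Finsupp.single σ 1) = pi (schurLam k (transpGen (partVal σ) k))
  hn : 2 ≤ n
  hk : 1 ≤ k

namespace QS
variable {A : Type*} [CommRing A] {n k : ℕ} (S : QS A n k)

/-- the associated sequences -/
def D : Dat A n k where
  h t := S.pi (hLam k t)
  e t := S.pi (eLamZ k t)
  hneg m hm := by rw [hLam, if_neg (by omega), map_zero]
  eneg m hm := by rw [eLamZ, if_neg (by omega), map_zero]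
  h0 := by
    rw [← map_one S.pi]
    congr 1
    apply Subtype.ext
    rw [← Nat.cast_zero, hLam_nat]; simp
  he m := by
    have := congrArg S.pi (he_Lam k m)
    simp only [map_sum, map_mul, map_pow, map_neg, map_one] at this
    rw [this]
    split_ifs <;> simp
  ebig m hm := by
    rw [eLamZ, if_pos (by omega), ← map_zero S.pi]
    congr 1
    apply Subtype.ext
    have h : MvPolynomial.esymm (Fin k) ℤ m.toNat = 0 := by
      rw [MvPolynomial.esymm, Finset.powersetCard_eq_empty.2, Finset.sum_empty]
      simp; omega
    exact h
  hn := S.pin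
  hbig m h1 h2 := by
    rw [← S.pib (m - n) (by omega) (by omega)]
    congr 2; omega
  n1 := by have := S.hn; omega
  k1 := S.hk

lemma fq_single_det (σ : PartBox (n - 1) k) :
    S.phi (Finsupp.single σ 1) =
    (Matrix.of fun i j : Fin k => S.D.h ((transpGen (partVal σ) k i : ℤ) - (i : ℕ) + (j : ℕ))).det := by
  rw [S.phis, schurLam, RingHom.map_det]
  rfl

lemma fq_single_gen (σ : PartBox (n - 1) k) (c : ℕ) (hc : ∀ j, padded (partVal σ) j ≤ c) :
    (Matrix.of fun i j : Fin c => S.D.h ((transpGen (partVal σ) c i : ℤ) - (i : ℕ) + (j : ℕ))).det =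
    S.D.Dt (fun i => padded (partVal σ) i) := by
  rw [Dat.Dt_eq _ _ (fun i => pad_le σ i)]
  apply dualJT c n _ _ S.D.hneg S.D.eneg S.D.h0 S.D.he
  · intro i; exact hc i
  · intro a; have := transp_le σ c a; omega
  · intro a j; exact transp_lt σ c a j

lemma fq_Dt (σ : PartBox (n - 1) k) :
    S.phi (Finsupp.single σ 1) = S.D.Dt (fun i => padded (partVal σ) i) := by
  rw [fq_single_det, fq_single_gen S _ _ (pad_le σ)]

lemma fq_eA [NeZero n] (t : ℤ) (ht : t < n + k) (v : HkSp ℤ n k) :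
    S.phi (eAInt ℤ n k 1 t v) = S.D.h t * S.phi v :=
  eA_action S.hn _ _ S.fq_Dt t ht v

lemma fq_sA [NeZero n] (σ : PartBox (n - 1) k) (v : HkSp ℤ n k) :
    S.phi (sAOp ℤ n k 1 σ v) = S.phi (Finsupp.single σ 1) * S.phi v := by
  unfold sAOp
  have h1 := ncDet_inter (R := ℤ) (R' := ℤ) S.phi.toAddMonoidHom
    (fun i j : Fin (padded (partVal σ) 0) => eAInt ℤ n k 1
      ((transpGen (partVal σ) (padded (partVal σ) 0) i : ℤ) - ((i : ℕ) : ℤ) + ((j : ℕ) : ℤ)))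
    (fun i j => (Algebra.lmul ℤ A).toRingHom (S.D.h
      ((transpGen (partVal σ) (padded (partVal σ) 0) i : ℤ) - ((i : ℕ) : ℤ) + ((j : ℕ) : ℤ))))
    (by
      intro i j v
      refine S.fq_eA _ ?_ v
      have := transp_le σ _ i
      have := pad_le σ 0
      have := j.2
      have := S.hn
      omega) v
  have h2 := ncDet_map (Algebra.lmul ℤ A).toRingHom
    (fun i j : Fin (padded (partVal σ) 0) => S.D.h
      ((transpGen (partVal σ) (padded (partVal σ) 0) i : ℤ) - ((i : ℕ) : ℤ) + ((j : ℕ) : ℤ)))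
  refine h1.trans ?_
  rw [h2, ncDet_comm, S.fq_single_gen _ _ (fun j => pad_anti σ 0 j (by omega)), ← S.fq_Dt]
  rfl

lemma fq_empty : S.phi (Finsupp.single (partEmpty (n - 1) k) 1) = 1 := by
  rw [S.fq_Dt, ← S.D.Dt_zero]
  congr 1
  funext i
  unfold padded
  split_ifs
  · rfl
  · rfl

/-- stabiliser of the image -/
def stab : Subring A where
  carrier := {a | ∀ x ∈ LinearMap.range S.phi, a * x ∈ LinearMap.range S.phi}
  mul_mem' := by
    intro a b ha hb x hx
    rw [mul_assoc]
    exact ha _ (hb _ hx)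
  one_mem' := by intro x hx; rwa [one_mul]
  add_mem' := by
    intro a b ha hb x hx
    rw [add_mul]
    exact add_mem (ha _ hx) (hb _ hx)
  zero_mem' := by intro x hx; rw [zero_mul]; exact zero_mem _
  neg_mem' := by
    intro a ha x hx
    rw [neg_mul]
    exact neg_mem (ha _ hx)

lemma stab_h [NeZero n] (t : ℤ) (ht : t < n + k) : S.D.h t ∈ S.stab := by
  rintro x ⟨v, rfl⟩
  exact ⟨_, S.fq_eA t ht v⟩

lemma stab_e [NeZero n] (m : ℕ) (hm : m ≤ k) : S.D.e m ∈ S.stab := by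
  induction m using Nat.strong_induction_on with
  | _ m ih =>
    rcases Nat.eq_zero_or_pos m with rfl | hm0
    · rw [Nat.cast_zero, Dat.e0]; exact one_mem _
    · have h1 := S.D.he m
      rw [if_neg (by omega), Finset.Nat.sum_antidiagonal_eq_sum_range_succ_mk, Finset.sum_range_succ'] at h1
      simp only [Nat.cast_zero, Dat.h0, one_mul, Nat.sub_zero] at h1
      have h2 := eq_neg_of_add_eq_zero_right h1
      have h3 : (-1) ^ m * S.D.e m ∈ S.stab := by
        rw [h2]
        apply neg_mem
        apply sum_mem
        intro i hi
        rw [Finset.mem_range] at hi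
        have := S.hn
        apply mul_mem (S.stab_h _ (by push_cast; omega))
        exact mul_mem (pow_mem (neg_mem (one_mem _)) _) (ih _ (by omega) (by omega))
      have h4 : S.D.e m = (-1) ^ m * ((-1) ^ m * S.D.e m) := by
        rw [← mul_assoc, ← mul_pow]; simp
      rw [h4]
      exact mul_mem (pow_mem (neg_mem (one_mem _)) _) h3

lemma fq_surj [NeZero n] : Function.Surjective S.phi := by
  intro q
  obtain ⟨a, rfl⟩ := S.pis q
  obtain ⟨p, rfl⟩ := MvPolynomial.esymmAlgHom_surjective (σ := Fin k) ℤ (n := k) (by simp) a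
  have key : S.pi (MvPolynomial.esymmAlgHom (Fin k) ℤ k p) ∈ S.stab := by
    induction p using MvPolynomial.induction_on with
    | C a =>
      have : (MvPolynomial.C a : MvPolynomial (Fin k) ℤ) = (a : MvPolynomial (Fin k) ℤ) := by simp
      rw [this, map_intCast, map_intCast]
      exact intCast_mem _ _
    | add p q hp hq => rw [map_add, map_add]; exact add_mem hp hq
    | mul_X p i hp =>
      rw [map_mul, map_mul]
      refine mul_mem hp ?_
      have := S.stab_e (i + 1) (by omega)
      convert this using 1
      show _ = S.pi (eLamZ k ((i + 1 : ℕ) : ℤ))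
      congr 1
      apply Subtype.ext
      rw [eLamZ_nat]
      simp [MvPolynomial.esymmAlgHom]
  have h1 := key 1 ⟨_, S.fq_empty⟩
  rw [mul_one] at h1
  exact h1
end QS

/-- the actual quotient -/
def QQ (n k : ℕ) (hn : 2 ≤ n) (hk : 1 ≤ k) :
    QS (↥(MvPolynomial.symmetricSubalgebra (Fin k) ℤ) ⧸ fusionIdeal n k) n k where
  pi := Ideal.Quotient.mk (fusionIdeal n k)
  pis := Ideal.Quotient.mk_surjective
  pin := by
    rw [← map_one (Ideal.Quotient.mk (fusionIdeal n k))]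
    exact (Ideal.Quotient.eq (I := fusionIdeal n k)).2 (Ideal.subset_span (Or.inl rfl))
  pib j h1 h2 := by
    refine (Ideal.Quotient.eq_zero_iff_mem (I := fusionIdeal n k)).2 ?_
    exact Ideal.subset_span (Or.inr (Or.inl ⟨j, h1, h2, rfl⟩))
  phi := fusionToQuot n k
  phis σ := by
    simp [fusionToQuot]
  hn := hn
  hk := hk

lemma final_mul {n k : ℕ} [NeZero n] (hn : 2 ≤ n) (hk : 1 ≤ k) (σ : PartBox (n - 1) k) (v : HkSp ℤ n k) :
    fusionToQuot n k (sAOp ℤ n k 1 σ v) = fusionToQuot n k (Finsupp.single σ 1) * fusionToQuot n k v :=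
  (QQ n k hn hk).fq_sA σ v

lemma final_one {n k : ℕ} [NeZero n] (hn : 2 ≤ n) (hk : 1 ≤ k) :
    fusionToQuot n k (Finsupp.single (partEmpty (n - 1) k) 1) = 1 :=
  (QQ n k hn hk).fq_empty

lemma final_surj {n k : ℕ} [NeZero n] (hn : 2 ≤ n) (hk : 1 ≤ k) :
    Function.Surjective (fusionToQuot n k) :=
  (QQ n k hn hk).fq_surj

end FR

namespace FR

/-- base change -/
def th (n k : ℕ) : HkSp ℤ n k →+ HkSp ℂ n k := Finsupp.mapRange.addMonoidHom (Int.castAddHom ℂ)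

variable {n k : ℕ} [NeZero n]

lemma th_single (σ : PartBox (n - 1) k) (m : ℤ) :
    th n k (Finsupp.single σ m) = Finsupp.single σ (m : ℂ) := by
  simp [th]

lemma th_apply (v : HkSp ℤ n k) (σ : PartBox (n - 1) k) : th n k v σ = (v σ : ℂ) := by
  simp [th]

lemma th_smul (v : HkSp ℤ n k) (m : ℤ) : th n k (m • v) = (m : ℂ) • th n k v := by
  ext σ
  simp [th_apply]

lemma th_toBasis (m : ZMod n → ℕ) : th n k (toBasis ℤ n k m 1) = toBasis ℂ n k m 1 := by
  unfold toBasis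
  rw [map_sum]
  apply Finset.sum_congr rfl
  intro μ _
  split_ifs
  · rw [th_single]; simp
  · simp

lemma th_aOp (i : ZMod n) (v : HkSp ℤ n k) : th n k (aOp ℤ n k 1 i v) = aOp ℂ n k 1 i (th n k v) := by
  induction v using Finsupp.induction_linear with
  | zero => simp
  | add f g hf hg => simp only [map_add, hf, hg]
  | single σ m =>
    rw [th_single]
    simp only [aOp, Finsupp.lift_apply, ite_self]
    rw [Finsupp.sum_single_index (by simp), Finsupp.sum_single_index (by simp), th_smul]
    congr 1
    split_ifs
    · simp
    · exact th_toBasis _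

lemma th_cyc (I : Finset (ZMod n)) (v : HkSp ℤ n k) :
    th n k (cycProdDesc (aOp ℤ n k 1) I v) = cycProdDesc (aOp ℂ n k 1) I (th n k v) := by
  unfold cycProdDesc
  apply list_inter
  intro i _ v
  split_ifs
  · exact th_aOp _ _
  · simp

lemma th_eA (t : ℤ) (v : HkSp ℤ n k) : th n k (eAInt ℤ n k 1 t v) = eAInt ℂ n k 1 t (th n k v) := by
  unfold eAInt
  split_ifs
  · simp
  · rw [LinearMap.sum_apply, LinearMap.sum_apply, map_sum]
    exact Finset.sum_congr rfl fun I _ => th_cyc I v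
  · simp
  · simp

lemma th_sA (σ : PartBox (n - 1) k) (v : HkSp ℤ n k) : th n k (sAOp ℤ n k 1 σ v) = sAOp ℂ n k 1 σ (th n k v) := by
  unfold sAOp
  exact ncDet_inter _ _ _ (fun _ _ v => th_eA _ v) _

lemma pair_eq (lam mu nu : PartBox (n - 1) k) :
    pairHk (Finsupp.single nu 1) (sAOp ℂ n k 1 lam (Finsupp.single mu 1)) =
      ((sAOp ℤ n k 1 lam (Finsupp.single mu 1) nu : ℤ) : ℂ) := by
  have : (Finsupp.single mu (1 : ℂ)) = th n k (Finsupp.single mu 1) := by rw [th_single]; simp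
  rw [this, ← th_sA, pairHk, Finset.sum_eq_single nu]
  · rw [th_apply]; simp
  · intro b _ hb
    simp [Finsupp.single_apply, hb.symm]
  · simp

lemma fusionMul_eq (lam mu : PartBox (n - 1) k) :
    fusionMulZ n k lam mu = sAOp ℤ n k 1 lam (Finsupp.single mu 1) := by
  unfold fusionMulZ
  simp only [pair_eq, Complex.intCast_re, Int.floor_intCast]
  exact Finsupp.univ_sum_single _

end FR

namespace FR

/-- dual functional on exponents, with given shift -/
def epsS (n k : ℕ) (β α : Fin k → ℤ) (s : ℤ) : ℤ :=
  (((((-1 : ℤˣ) ^ (k - 1)) ^ s : ℤˣ)) : ℤ) *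
    (Matrix.of fun i j : Fin k => if ((α i + s : ℤ) : ZMod (n + k)) = ((β j : ℤ) : ZMod (n + k)) then (1 : ℤ) else 0).det

/-- dual functional on exponents -/
def eps (n k : ℕ) (β α : Fin k → ℤ) : ℤ :=
  if (n : ℤ) ∣ (∑ i, α i - ∑ i, β i) then epsS n k β α ((∑ i, α i - ∑ i, β i) / n) else 0

lemma eps_perm (n k : ℕ) (β α : Fin k → ℤ) (τ : Equiv.Perm (Fin k)) :
    eps n k β (fun i => α (τ i)) = (Equiv.Perm.sign τ : ℤ) * eps n k β α := by
  unfold eps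
  have h : ∑ i, α (τ i) = ∑ i, α i := Equiv.sum_comp τ α
  rw [h]
  split_ifs
  · unfold epsS
    have := Matrix.det_permute τ (Matrix.of fun i j : Fin k =>
      if ((α i + ((∑ i, α i - ∑ i, β i) / n) : ℤ) : ZMod (n + k)) = ((β j : ℤ) : ZMod (n + k)) then (1 : ℤ) else 0)
    have h2 : (Matrix.of fun i j : Fin k => if ((α (τ i) + ((∑ i, α i - ∑ i, β i) / n) : ℤ) : ZMod (n + k)) =
        ((β j : ℤ) : ZMod (n + k)) then (1 : ℤ) else 0) = (Matrix.of fun i j : Fin k =>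
      if ((α i + ((∑ i, α i - ∑ i, β i) / n) : ℤ) : ZMod (n + k)) = ((β j : ℤ) : ZMod (n + k)) then (1 : ℤ) else 0).submatrix τ id := rfl
    rw [h2, this]
    push_cast
    ring
  · simp

lemma eps_shift (n k : ℕ) (hn : 1 ≤ n) (β α : Fin k → ℤ) (i₀ : Fin k) :
    eps n k β (fun i => α i + if i = i₀ then ((n + k : ℕ) : ℤ) else 0) =
      (-1) ^ (k - 1) * eps n k β (fun i => α i + 1) := by
  unfold eps
  have h1 : ∑ i, (α i + if i = i₀ then ((n + k : ℕ) : ℤ) else 0) = ∑ i, α i + (n + k) := by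
    rw [Finset.sum_add_distrib]; simp
  have h2 : ∑ i : Fin k, (α i + 1) = ∑ i, α i + k := by
    rw [Finset.sum_add_distrib]; simp
  rw [h1, h2]
  set t := ∑ i, α i + k - ∑ i, β i with ht
  have h3 : ∑ i, α i + (n + k) - ∑ i, β i = t + n := by rw [ht]; ring
  rw [h3]
  have hn0 : (n : ℤ) ≠ 0 := by omega
  have hd : (n : ℤ) ∣ t + n ↔ (n : ℤ) ∣ t := by simp
  have hq : (t + n) / n = t / n + 1 := Int.add_ediv_of_dvd_right (dvd_refl _) |>.trans (by rw [Int.ediv_self hn0])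
  simp only [hd, hq]
  split_ifs with h
  · unfold epsS
    rw [zpow_add_one]
    have hM : ∀ i j : Fin k, ((((α i + if i = i₀ then ((n + k : ℕ) : ℤ) else 0) + (t / n + 1) : ℤ) : ZMod (n + k)) = ((β j : ℤ) : ZMod (n + k))) ↔
      (((α i + 1 + t / n : ℤ) : ZMod (n + k)) = ((β j : ℤ) : ZMod (n + k))) := by
      intro i j
      have : (((α i + if i = i₀ then ((n + k : ℕ) : ℤ) else 0) + (t / n + 1) : ℤ) : ZMod (n + k)) =
        ((α i + 1 + t / n : ℤ) : ZMod (n + k)) := by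
        have hz : ((n + k : ℕ) : ZMod (n + k)) = 0 := ZMod.natCast_self _
        split_ifs
        · push_cast
          push_cast at hz
          linear_combination hz
        · push_cast; ring
      rw [this]
    simp only [hM]
    push_cast
    ring
  · simp

lemma eps_pos_aux (n k : ℕ) (hn : 1 ≤ n) (β γ a : Fin k → ℤ) (s : ℤ)
    (hβ : ∀ i, 0 ≤ β i ∧ β i ≤ n + k - 2) (hγ : ∀ i, 0 ≤ γ i ∧ γ i ≤ n + k - 2)
    (hinj : Function.Injective γ) (ha : ∀ i, γ i + s = β i + (n + k) * a i) (hs : ∑ i, a i = s)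
    (hpos : 0 < s) : False := by
  set N : ℤ := n + k with hN
  have hNpos : 0 < N := by omega
  set q := s / N with hq
  set r := s % N with hr
  have hsq : s = N * q + r := by rw [hq, hr]; exact (Int.mul_ediv_add_emod s N).symm
  have hr0 : 0 ≤ r := Int.emod_nonneg _ hNpos.ne'
  have hr1 : r < N := Int.emod_lt_of_pos _ hNpos
  have hq0 : 0 ≤ q := Int.ediv_nonneg hpos.le hNpos.le
  have ht : ∀ i, a i - q = 0 ∨ (a i - q = 1 ∧ N - r ≤ γ i) := by
    intro i
    have h1 := ha i
    have h2 : γ i + r - β i = N * (a i - q) := by rw [hsq] at h1; linarith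
    have h3 := hβ i
    have h4 := hγ i
    generalize a i - q = x at *
    have hx1 : -1 < x := by
      by_contra hc
      have : N * x ≤ N * (-1) := mul_le_mul_of_nonneg_left (by omega) hNpos.le
      omega
    have hx2 : x < 2 := by
      by_contra hc
      have : N * 2 ≤ N * x := mul_le_mul_of_nonneg_left (by omega) hNpos.le
      omega
    have : x = 0 ∨ x = 1 := by omega
    rcases this with h | h
    · left; exact h
    · right
      refine ⟨h, ?_⟩
      rw [h] at h2
      omega
  have hsum : ∑ i, (a i - q) ≤ ((Finset.Icc (N - r) (N - 2)).card : ℤ) := by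
    have h1 : ∑ i, (a i - q) ≤ ∑ i, if N - r ≤ γ i then (1 : ℤ) else 0 := by
      apply Finset.sum_le_sum
      intro i _
      rcases ht i with h | h
      · rw [h]; split_ifs <;> omega
      · rw [h.1, if_pos h.2]
    refine h1.trans ?_
    rw [Finset.sum_boole]
    have h2 := Finset.card_le_card_of_injOn (s := Finset.univ.filter fun i => N - r ≤ γ i) (t := Finset.Icc (N - r) (N - 2)) γ
      (by
        intro i hi
        simp only [Finset.coe_filter, Finset.mem_univ, true_and, Set.mem_setOf_eq] at hi
        simp only [Finset.coe_Icc, Set.mem_Icc]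
        exact ⟨hi, (hγ i).2⟩) hinj.injOn
    exact_mod_cast h2
  rw [Int.card_Icc, Finset.sum_sub_distrib, hs] at hsum
  simp only [Finset.sum_const, Finset.card_univ, Fintype.card_fin, nsmul_eq_mul] at hsum
  have h5 : s - k * q = n * q + r := by rw [hsq, hN]; ring
  rw [h5] at hsum
  rcases lt_or_ge 0 q with h | h
  · have : (n : ℤ) * 1 ≤ n * q := mul_le_mul_of_nonneg_left (by omega) (by omega)
    omega
  · have : q = 0 := by omega
    rw [this] at hsum hsq
    simp at hsq
    omega

lemma eps_ne (n k : ℕ) (hn : 1 ≤ n) (β γ : Fin k → ℤ)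
    (hβ : ∀ i, 0 ≤ β i ∧ β i ≤ n + k - 2) (hγ : ∀ i, 0 ≤ γ i ∧ γ i ≤ n + k - 2)
    (bi : Function.Injective β) (gi : Function.Injective γ) (h : eps n k β γ ≠ 0) :
    ∃ τ : Equiv.Perm (Fin k), ∀ i, γ (τ i) = β i := by
  unfold eps at h
  split_ifs at h with hd
  swap
  · exact absurd rfl h
  obtain ⟨s, hs⟩ := hd
  have hn0 : (n : ℤ) ≠ 0 := by omega
  rw [hs, Int.mul_ediv_cancel_left _ hn0] at h
  unfold epsS at h
  have h1 := right_ne_zero_of_mul h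
  rw [Matrix.det_apply'] at h1
  obtain ⟨τ, _, hτ⟩ := Finset.exists_ne_zero_of_sum_ne_zero h1
  have h2 := right_ne_zero_of_mul hτ
  rw [Finset.prod_ne_zero_iff] at h2
  have h3 : ∀ i, ∃ a : ℤ, γ (τ i) + s = β i + (n + k) * a := by
    intro i
    have h4 := h2 i (Finset.mem_univ _)
    simp only [Matrix.of_apply, ne_eq, ite_eq_right_iff, one_ne_zero, imp_false, not_not] at h4
    rw [ZMod.intCast_eq_intCast_iff_dvd_sub] at h4
    obtain ⟨c, hc⟩ := h4
    refine ⟨-c, ?_⟩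
    push_cast at hc
    linear_combination -hc
  choose a ha using h3
  have hsa : ∑ i, a i = s := by
    have e1 : ∑ i, (γ (τ i) + s) = ∑ i, (β i + (n + k) * a i) := Finset.sum_congr rfl fun i _ => ha i
    rw [Finset.sum_add_distrib, Finset.sum_add_distrib, Equiv.sum_comp τ γ, ← Finset.mul_sum] at e1
    simp only [Finset.sum_const, Finset.card_univ, Fintype.card_fin, nsmul_eq_mul] at e1
    have e2 : ((n : ℤ) + k) * (∑ i, a i) = (n + k) * s := by linear_combination hs - e1
    exact mul_left_cancel₀ (by omega) e2
  have hs0 : s = 0 := by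
    rcases lt_trichotomy s 0 with h | h | h
    · exfalso
      refine eps_pos_aux n k hn (fun i => γ (τ i)) β (fun i => - a i) (-s) (fun i => hγ _) hβ bi ?_ ?_ (by omega)
      · intro i; linear_combination -(ha i)
      · rw [Finset.sum_neg_distrib, hsa]
    · exact h
    · exfalso
      exact eps_pos_aux n k hn β (fun i => γ (τ i)) a s hβ (fun i => hγ _) (gi.comp τ.injective) ha hsa h
  refine ⟨τ, fun i => ?_⟩
  have h4 := ha i
  have h5 := hβ i
  have h6 := hγ (τ i)
  have : a i = 0 := by
    rw [hs0] at h4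
    have hx : γ (τ i) - β i = (n + k) * a i := by linear_combination h4
    generalize a i = x at *
    have hx1 : -1 < x := by
      by_contra hc
      have : ((n : ℤ) + k) * x ≤ (n + k) * (-1) := mul_le_mul_of_nonneg_left (by omega) (by omega)
      omega
    have hx2 : x < 1 := by
      by_contra hc
      have : ((n : ℤ) + k) * 1 ≤ (n + k) * x := mul_le_mul_of_nonneg_left (by omega) (by omega)
      omega
    omega
  rw [this, hs0] at h4
  linarith

lemma eps_self (n k : ℕ) (hn : 1 ≤ n) (β : Fin k → ℤ)
    (hβ : ∀ i, 0 ≤ β i ∧ β i ≤ n + k - 2) (bi : Function.Injective β) : eps n k β β = 1 := by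
  unfold eps
  rw [sub_self, if_pos (dvd_zero _), Int.zero_ediv, epsS]
  have : (Matrix.of fun i j : Fin k => if ((β i + 0 : ℤ) : ZMod (n + k)) = ((β j : ℤ) : ZMod (n + k)) then (1 : ℤ) else 0) = 1 := by
    ext i j
    rw [Matrix.of_apply, Matrix.one_apply]
    congr 1
    rw [add_zero, eq_iff_iff]
    constructor
    · intro h
      rw [ZMod.intCast_eq_intCast_iff_dvd_sub] at h
      have h1 := hβ i
      have h2 := hβ j
      apply bi
      have := Int.eq_zero_of_abs_lt_dvd h (by rw [abs_lt]; push_cast; constructor <;> omega)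
      omega
    · intro h; rw [h]
  rw [this]
  simp

end FR

namespace FR
open MvPolynomial

/-- alternants -/
def alt (k : ℕ) (α : Fin k → ℕ) : MvPolynomial (Fin k) ℤ :=
  (Matrix.of fun i l : Fin k => (X l : MvPolynomial (Fin k) ℤ) ^ α i).det

lemma hLam_neg (k : ℕ) (t : ℤ) (h : t < 0) : hLam k t = 0 := by
  rw [hLam, if_neg (by omega)]

lemma hLam_one (k : ℕ) : hLam k 0 = 1 := by
  apply Subtype.ext
  have := hLam_nat k 0
  simpa using this

lemma jt_entry (k : ℕ) (l : Fin k) (a : ℕ) :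
    ∑ j : Fin k, (hLam k ((a : ℤ) - (k - 1) + (j : ℕ)) : MvPolynomial (Fin k) ℤ) * kap k l (k - 1 - j) = X l ^ a := by
  rw [← kap_rel k l a, ← Finset.Nat.sum_antidiagonal_swap]
  simp only [Prod.fst_swap, Prod.snd_swap]
  rw [Finset.Nat.sum_antidiagonal_eq_sum_range_succ_mk]
  set g : ℕ → MvPolynomial (Fin k) ℤ := fun s => (hLam k ((a : ℤ) - s) : MvPolynomial (Fin k) ℤ) * kap k l s with hg
  have h1 : ∑ s ∈ Finset.range a.succ, hsymm (Fin k) ℤ (a - s) * kap k l s = ∑ s ∈ Finset.range (a + 1 + k), g s := by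
    rw [← Finset.sum_subset (s₁ := Finset.range a.succ) (s₂ := Finset.range (a + 1 + k)) (f := g)]
    · apply Finset.sum_congr rfl
      intro s hs
      rw [Finset.mem_range] at hs
      rw [hg, ← hLam_nat]
      simp only
      rw [Nat.cast_sub (by omega)]
    · intro x hx
      rw [Finset.mem_range] at *
      omega
    · intro x _ hx
      rw [Finset.mem_range] at hx
      rw [hg]
      simp only
      rw [hLam_neg _ _ (by omega)]
      simp
  have h2 : ∑ s ∈ Finset.range k, g s = ∑ s ∈ Finset.range (a + 1 + k), g s := by
    apply Finset.sum_subset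
    · intro x hx
      rw [Finset.mem_range] at *
      omega
    · intro x _ hx
      rw [Finset.mem_range] at hx
      rw [hg]
      simp only
      rw [kap_zero _ _ _ (by omega), mul_zero]
  refine Eq.trans ?_ (h2.trans h1.symm)
  rw [Finset.sum_range, ← Equiv.sum_comp Fin.revPerm]
  apply Finset.sum_congr rfl
  intro j _
  rw [hg]
  simp only [Fin.revPerm_apply, Fin.val_rev]
  have := j.2
  congr 3
  · omega
  · omega

lemma jt_K (k : ℕ) (μ : Fin k → ℕ) :
    (schurLam k μ : MvPolynomial (Fin k) ℤ) *
      (Matrix.of fun j l : Fin k => kap k l (k - 1 - j)).det = alt k (fun i => μ i + (k - 1 - i)) := by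
  have h0 : (schurLam k μ : MvPolynomial (Fin k) ℤ) =
      (Matrix.of fun i j : Fin k => (hLam k ((μ i : ℤ) - (i : ℕ) + (j : ℕ)) : MvPolynomial (Fin k) ℤ)).det := by
    have := RingHom.map_det (symmetricSubalgebra (Fin k) ℤ).val.toRingHom
      (Matrix.of fun i j : Fin k => hLam k ((μ i : ℤ) - (i : ℕ) + (j : ℕ)))
    exact this
  rw [h0, ← Matrix.det_mul, alt]
  congr 1
  ext1 i l
  rw [Matrix.mul_apply]
  simp only [Matrix.of_apply]
  rw [← jt_entry]
  apply Finset.sum_congr rfl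
  intro j _
  have := i.2
  congr 4
  omega

lemma schur_hook (k m : ℕ) (hk : 1 ≤ k) :
    schurLam k (fun i => if (i : ℕ) = 0 then m else 0) = hLam k m := by
  rw [schurLam, Matrix.det_of_upperTriangular]
  · simp only [Matrix.of_apply]
    rw [Finset.prod_eq_single (⟨0, by omega⟩ : Fin k)]
    · simp
    · intro i _ hi
      have : (i : ℕ) ≠ 0 := fun h => hi (Fin.ext h)
      rw [if_neg this]
      rw [← hLam_one]
      congr 1
      push_cast
      omega
    · simp
  · intro i j hij
    simp only [id] at hij
    have h : (j : ℕ) < i := hij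
    rw [Matrix.of_apply]
    apply hLam_neg
    rw [if_neg (by omega)]
    push_cast
    omega

lemma jt (k : ℕ) (hk : 1 ≤ k) (μ : Fin k → ℕ) :
    (schurLam k μ : MvPolynomial (Fin k) ℤ) * alt k (fun i => k - 1 - i) = alt k (fun i => μ i + (k - 1 - i)) := by
  rw [← jt_K]
  have h := jt_K k (fun i => if (i : ℕ) = 0 then 0 else 0)
  rw [schur_hook k 0 hk, Nat.cast_zero, hLam_one] at h
  simp only [ite_self, zero_add] at h
  rw [← h]
  simp

lemma alt_perm (k : ℕ) (α : Fin k → ℕ) (τ : Equiv.Perm (Fin k)) :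
    alt k (fun i => α (τ i)) = (Equiv.Perm.sign τ : ℤ) * alt k α :=
  Matrix.det_permute τ (Matrix.of fun i l : Fin k => (X l : MvPolynomial (Fin k) ℤ) ^ α i)

lemma alt_succ (k : ℕ) (α : Fin k → ℕ) :
    alt k (fun i => α i + 1) = (eLam k k : MvPolynomial (Fin k) ℤ) * alt k α := by
  have h1 : (eLam k k : MvPolynomial (Fin k) ℤ) = ∏ i, X i := by
    show esymm (Fin k) ℤ k = _
    rw [esymm]
    have : Finset.powersetCard k (Finset.univ : Finset (Fin k)) = {Finset.univ} := by
      have := Finset.powersetCard_self (Finset.univ : Finset (Fin k))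
      rwa [Finset.card_univ, Fintype.card_fin] at this
    rw [this, Finset.sum_singleton]
  rw [h1, alt, alt, ← Matrix.det_mul_row]
  congr 1
  ext1 i l
  simp only [Matrix.of_apply]
  rw [pow_succ']

lemma alt_rep (k : ℕ) (α : Fin k → ℕ) (i j : Fin k) (h : i ≠ j) (e : α i = α j) : alt k α = 0 := by
  apply Matrix.det_zero_of_row_eq h
  funext l
  simp [e]

lemma alt_rot (k : ℕ) (hk : 1 ≤ k) :
    alt k (fun i => if (i : ℕ) = 0 then 0 else k - i) = (-1) ^ (k - 1) * alt k (fun i => k - 1 - i) := by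
  obtain ⟨k, rfl⟩ : ∃ K, k = K + 1 := ⟨k - 1, by omega⟩
  have := alt_perm (k + 1) (fun i => if (i : ℕ) = 0 then 0 else k + 1 - i) (finRotate (k + 1))
  rw [sign_finRotate] at this
  have h2 : (fun i : Fin (k + 1) => if ((finRotate (k + 1) i : Fin (k + 1)) : ℕ) = 0 then 0 else k + 1 - (finRotate (k + 1) i : Fin (k + 1))) =
      fun i : Fin (k + 1) => k + 1 - 1 - (i : ℕ) := by
    funext i
    rcases Fin.eq_castSucc_or_eq_last i with ⟨j, rfl⟩ | rfl
    · rw [finRotate_of_lt (by simp)]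
      simp
    · rw [finRotate_last]
      simp
  rw [h2] at this
  rw [this]
  push_cast
  rw [← mul_assoc, ← mul_pow]
  simp
end FR

namespace FR
open MvPolynomial

/-- linear functional on polynomials -/
def ell (n k : ℕ) (β : Fin k → ℤ) : MvPolynomial (Fin k) ℤ →ₗ[ℤ] ℤ :=
  (basisMonomials (Fin k) ℤ).constr ℤ (fun m => eps n k β (fun i => (m i : ℤ)))

lemma ell_mono (n k : ℕ) (β : Fin k → ℤ) (m : Fin k →₀ ℕ) :
    ell n k β (monomial m 1) = eps n k β (fun i => (m i : ℤ)) := by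
  have := (basisMonomials (Fin k) ℤ).constr_basis ℤ (fun m => eps n k β (fun i => (m i : ℤ))) m
  rwa [coe_basisMonomials] at this

lemma ell_rename (n k : ℕ) (β : Fin k → ℤ) (τ : Equiv.Perm (Fin k)) (P : MvPolynomial (Fin k) ℤ) :
    ell n k β (rename τ P) = (Equiv.Perm.sign τ : ℤ) * ell n k β P := by
  have h : (ell n k β).comp (rename (R := ℤ) τ).toLinearMap = (Equiv.Perm.sign τ : ℤ) • ell n k β := by
    apply (basisMonomials (Fin k) ℤ).ext
    intro m
    rw [coe_basisMonomials]
    show ell n k β (rename τ (monomial m 1)) = (Equiv.Perm.sign τ : ℤ) * ell n k β (monomial m 1)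
    rw [rename_monomial, ell_mono, ell_mono, ← Equiv.Perm.sign_symm, ← eps_perm]
    congr 1
    funext i
    rw [← Finsupp.equivMapDomain_eq_mapDomain]
    rfl
  exact LinearMap.congr_fun h P

/-- monomial with exponent function -/
def xp (k : ℕ) (α : Fin k → ℕ) : MvPolynomial (Fin k) ℤ := ∏ i, X i ^ α i

lemma xp_eq (k : ℕ) (α : Fin k → ℕ) : xp k α = monomial (Finsupp.equivFunOnFinite.symm α) 1 := by
  rw [monomial_eq, Finsupp.prod_fintype _ _ (by simp)]
  simp [xp]

lemma ell_xp (n k : ℕ) (β : Fin k → ℤ) (α : Fin k → ℕ) :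
    ell n k β (xp k α) = eps n k β (fun i => (α i : ℤ)) := by
  rw [xp_eq, ell_mono]; rfl

lemma ell_shift (n k : ℕ) (hn : 1 ≤ n) (β : Fin k → ℤ) (a b : Fin k → ℕ) (i₀ : Fin k)
    (hab : ∀ i, a i + 1 = b i + if i = i₀ then n + k else 0) (P : MvPolynomial (Fin k) ℤ) :
    ell n k β (P * xp k a) = (-1) ^ (k - 1) * ell n k β (P * xp k b) := by
  have h : (ell n k β).comp (LinearMap.mulRight ℤ (xp k a)) =
      ((-1) ^ (k - 1) : ℤ) • (ell n k β).comp (LinearMap.mulRight ℤ (xp k b)) := by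
    apply (basisMonomials (Fin k) ℤ).ext
    intro m
    rw [coe_basisMonomials]
    rw [LinearMap.smul_apply, LinearMap.comp_apply, LinearMap.comp_apply, LinearMap.mulRight_apply,
      LinearMap.mulRight_apply, smul_eq_mul, xp_eq, xp_eq, monomial_mul, monomial_mul, one_mul, ell_mono, ell_mono]
    have := eps_shift n k hn β (fun i => (m i : ℤ) + b i - 1) i₀
    convert this using 2
    · funext i
      have := hab i
      simp only [Finsupp.add_apply, Finsupp.equivFunOnFinite_symm_apply_apply]
      split_ifs with h
      · rw [if_pos h] at this
        push_cast
        omega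
      · rw [if_neg h] at this
        push_cast
        omega
    · congr 1
      funext i
      simp
  exact LinearMap.congr_fun h P

lemma ell_alt (n k : ℕ) (β : Fin k → ℤ) (F : MvPolynomial (Fin k) ℤ) (hF : F.IsSymmetric) (α : Fin k → ℕ) :
    ell n k β (F * alt k α) = (k.factorial : ℤ) * ell n k β (F * xp k α) := by
  rw [alt, Matrix.det_apply', Finset.mul_sum, map_sum]
  have h : ∀ σ : Equiv.Perm (Fin k), ell n k β (F * (((Equiv.Perm.sign σ : ℤ) : MvPolynomial (Fin k) ℤ) *
      ∏ i, (Matrix.of fun i l : Fin k => (X l : MvPolynomial (Fin k) ℤ) ^ α i) (σ i) i)) = ell n k β (F * xp k α) := by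
    intro σ
    have h1 : F * ∏ i, (Matrix.of fun i l : Fin k => (X l : MvPolynomial (Fin k) ℤ) ^ α i) (σ i) i =
        rename σ.symm (F * xp k α) := by
      rw [map_mul, hF, xp, map_prod]
      congr 1
      simp only [Matrix.of_apply, map_pow, rename_X]
      rw [← Equiv.prod_comp σ (fun i => (X (σ.symm i) : MvPolynomial (Fin k) ℤ) ^ α i)]
      simp
    rw [mul_left_comm, h1, ← zsmul_eq_mul, map_zsmul, ell_rename, Equiv.Perm.sign_symm, smul_eq_mul, ← mul_assoc]
    rcases Int.units_eq_one_or (Equiv.Perm.sign σ) with h | h <;> simp [h]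
  rw [Finset.sum_congr rfl fun σ _ => h σ]
  simp [Finset.card_univ, Fintype.card_perm]

/-- staircase alternant -/
def ad (k : ℕ) : MvPolynomial (Fin k) ℤ := alt k (fun i => k - 1 - i)

lemma ell_h (n k : ℕ) (hn : 1 ≤ n) (hk : 1 ≤ k) (β : Fin k → ℤ) (F : MvPolynomial (Fin k) ℤ) (hF : F.IsSymmetric) (j : ℕ) :
    ell n k β (F * (hLam k ((n + j : ℕ) : ℤ) : MvPolynomial (Fin k) ℤ) * ad k) =
      (-1) ^ (k - 1) * ell n k β (F * alt k (fun i => if (i : ℕ) = 0 then j else k - i)) := by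
  rw [← schur_hook k (n + j) hk, mul_assoc, ad, jt k hk, ell_alt n k β F hF, ell_alt n k β F hF,
    ell_shift n k hn β _ (fun i => if (i : ℕ) = 0 then j else k - i) ⟨0, by omega⟩ _ F]
  · ring
  · intro i
    have := i.2
    simp only [Fin.ext_iff]
    split_ifs with h <;> omega

lemma ell_ideal (n k : ℕ) (hn : 1 ≤ n) (hk : 1 ≤ k) (β : Fin k → ℤ) (x : ↥(symmetricSubalgebra (Fin k) ℤ))
    (hx : x ∈ fusionIdeal n k) :
    ∀ F : ↥(symmetricSubalgebra (Fin k) ℤ), ell n k β ((F : MvPolynomial (Fin k) ℤ) * x * ad k) = 0 := by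
  unfold fusionIdeal at hx
  rw [Ideal.span] at hx
  refine Submodule.span_induction ?_ ?_ ?_ ?_ hx
  · intro x hx F
    have hF : (F : MvPolynomial (Fin k) ℤ).IsSymmetric := (mem_symmetricSubalgebra _).1 F.2
    rcases hx with h | ⟨j, hj1, hj2, h⟩ | h
    · subst h
      have h1 := ell_h n k hn hk β F hF 0
      rw [alt_rot k hk] at h1
      have h2 : (F : MvPolynomial (Fin k) ℤ) * ((hLam k (n : ℤ) - 1 : ↥(symmetricSubalgebra (Fin k) ℤ)) : MvPolynomial (Fin k) ℤ) * ad k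
        = F * (hLam k ((n + 0 : ℕ) : ℤ) : MvPolynomial (Fin k) ℤ) * ad k - F * ad k := by
        have : ((hLam k (n : ℤ) - 1 : ↥(symmetricSubalgebra (Fin k) ℤ)) : MvPolynomial (Fin k) ℤ) =
          (hLam k ((n + 0 : ℕ) : ℤ) : MvPolynomial (Fin k) ℤ) - 1 := rfl
        rw [this]; ring
      rw [h2, map_sub, h1]
      have h3 : (F : MvPolynomial (Fin k) ℤ) * ((-1) ^ (k - 1) * alt k (fun i => k - 1 - i)) = ((-1) ^ (k - 1) : ℤ) • (F * ad k) := by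
        rw [ad, zsmul_eq_mul]; push_cast; ring
      rw [h3, map_zsmul, smul_eq_mul, ← mul_assoc, ← mul_pow]
      simp
    · subst h
      have h1 := ell_h n k hn hk β F hF j
      rw [alt_rep k _ ⟨0, by omega⟩ ⟨k - j, by omega⟩ (by simp [Fin.ext_iff]; omega)
        (by simp only [if_true]; rw [if_neg (by omega)]; omega)] at h1
      push_cast at h1
      rw [h1]
      simp
    · subst h
      have h1 := ell_h n k hn hk β F hF k
      have h4 : (fun i : Fin k => if (i : ℕ) = 0 then k else k - i) = fun i : Fin k => (k - 1 - i) + 1 := by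
        funext i
        have := i.2
        split_ifs <;> omega
      rw [h4, alt_succ] at h1
      have h2 : (F : MvPolynomial (Fin k) ℤ) * ((hLam k ((n : ℤ) + (k : ℤ)) + (-1) ^ k * eLam k k : ↥(symmetricSubalgebra (Fin k) ℤ)) : MvPolynomial (Fin k) ℤ) * ad k
        = F * (hLam k ((n + k : ℕ) : ℤ) : MvPolynomial (Fin k) ℤ) * ad k + ((-1) ^ k : ℤ) • (F * ((eLam k k : MvPolynomial (Fin k) ℤ) * ad k)) := by
        have : ((hLam k ((n : ℤ) + (k : ℤ)) + (-1) ^ k * eLam k k : ↥(symmetricSubalgebra (Fin k) ℤ)) : MvPolynomial (Fin k) ℤ) =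
          (hLam k ((n : ℤ) + (k : ℤ)) : MvPolynomial (Fin k) ℤ) + (-1) ^ k * (eLam k k : MvPolynomial (Fin k) ℤ) := rfl
        rw [this, zsmul_eq_mul]; push_cast; ring
      rw [h2, map_add, h1, map_zsmul, smul_eq_mul, ad, ← add_mul]
      obtain ⟨K, rfl⟩ : ∃ K, k = K + 1 := ⟨k - 1, by omega⟩
      rw [Nat.add_sub_cancel, pow_succ]
      simp
  · intro F; simp
  · intro x y _ _ hx hy F
    have : (F : MvPolynomial (Fin k) ℤ) * ((x + y : ↥(symmetricSubalgebra (Fin k) ℤ)) : MvPolynomial (Fin k) ℤ) * ad k = F * x * ad k + F * y * ad k := by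
      rw [Subalgebra.coe_add]; ring
    rw [this, map_add, hx, hy, add_zero]
  · intro a x _ hx F
    have := hx (F * a)
    rw [Subalgebra.coe_mul] at this
    rw [smul_eq_mul, Subalgebra.coe_mul, ← mul_assoc]
    exact this

/-- beta numbers -/
def bet (n k : ℕ) (ν : PartBox (n - 1) k) (i : Fin k) : ℕ := transpGen (partVal ν) k i + (k - 1 - i)

lemma bet_anti (n k : ℕ) (ν : PartBox (n - 1) k) (i j : Fin k) (h : i < j) : bet n k ν j < bet n k ν i := by
  unfold bet
  have h1 : transpGen (partVal ν) k j ≤ transpGen (partVal ν) k i := by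
    by_contra hc
    push Not at hc
    have h2 := (transp_lt ν k j _).1 hc
    have h3 := (transp_lt ν k i (transpGen (partVal ν) k i)).2 (by have : (i : ℕ) < j := h; omega)
    omega
  have h2 : (i : ℕ) < j := h
  have := j.2
  omega

lemma bet_inj (n k : ℕ) (ν : PartBox (n - 1) k) : Function.Injective (fun i => (bet n k ν i : ℤ)) := by
  intro i j h
  have h' : bet n k ν i = bet n k ν j := by simpa using h
  rcases lt_trichotomy i j with h1 | h1 | h1
  · have := bet_anti n k ν i j h1; omega
  · exact h1
  · have := bet_anti n k ν j i h1; omega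

lemma bet_range (n k : ℕ) (hn : 2 ≤ n) (ν : PartBox (n - 1) k) (i : Fin k) :
    0 ≤ (bet n k ν i : ℤ) ∧ (bet n k ν i : ℤ) ≤ n + k - 2 := by
  have := transp_le ν k i
  have h2 := i.2
  unfold bet
  omega

lemma bet_eq (n k : ℕ) (hn : 2 ≤ n) (lam nu : PartBox (n - 1) k)
    (h : eps n k (fun i => (bet n k nu i : ℤ)) (fun i => (bet n k lam i : ℤ)) ≠ 0) : lam = nu := by
  obtain ⟨τ, hτ⟩ := eps_ne n k (by omega) _ _ (bet_range n k hn nu) (bet_range n k hn lam) (bet_inj n k nu) (bet_inj n k lam) h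
  have hm : StrictMono τ := by
    intro i j hij
    by_contra hc
    push Not at hc
    have h1 : bet n k lam (τ i) = bet n k nu i := by exact_mod_cast hτ i
    have h2 : bet n k lam (τ j) = bet n k nu j := by exact_mod_cast hτ j
    have h3 := bet_anti n k nu i j hij
    have h4 : τ j ≠ τ i := fun e => hij.ne' (τ.injective e)
    have h5 := bet_anti n k lam (τ j) (τ i) (lt_of_le_of_ne hc h4)
    omega
  have hid : ∀ i, τ i = i := by
    intro i
    have := Subsingleton.elim (hm.orderIsoOfSurjective τ τ.surjective) (OrderIso.refl (Fin k))
    exact congrArg (fun f : Fin k ≃o Fin k => f i) this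
  have ht : ∀ i, transpGen (partVal lam) k i = transpGen (partVal nu) k i := by
    intro i
    have h1 : bet n k lam (τ i) = bet n k nu i := by exact_mod_cast hτ i
    rw [hid] at h1
    unfold bet at h1
    omega
  apply pad_ext
  intro j _
  have hle : ∀ (a b : PartBox (n - 1) k) (_ : ∀ i, transpGen (partVal a) k i = transpGen (partVal b) k i),
      padded (partVal a) j ≤ padded (partVal b) j := by
    intro a b hab
    by_contra hc
    push Not at hc
    have hb : padded (partVal a) j ≤ k := pad_le a j
    have h1 := (transp_lt a k ⟨padded (partVal b) j, by omega⟩ j).2 hc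
    rw [hab] at h1
    have h2 := (transp_lt b k ⟨padded (partVal b) j, by omega⟩ j).1 h1
    simp only at h2
    omega
  exact le_antisymm (hle _ _ ht) (hle _ _ fun i => (ht i).symm)

lemma ell_schur (n k : ℕ) (hn : 2 ≤ n) (hk : 1 ≤ k) (lam nu : PartBox (n - 1) k) :
    ell n k (fun i => (bet n k nu i : ℤ)) ((schurLam k (transpGen (partVal lam) k) : MvPolynomial (Fin k) ℤ) * ad k) =
      if lam = nu then (k.factorial : ℤ) else 0 := by
  have h1 := ell_alt n k (fun i => (bet n k nu i : ℤ)) 1 (MvPolynomial.IsSymmetric.one) (bet n k lam)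
  rw [one_mul, one_mul, ell_xp] at h1
  rw [ad, jt k hk]
  refine h1.trans ?_
  split_ifs with h
  · subst h
    rw [eps_self n k (by omega) _ (bet_range n k hn lam) (bet_inj n k lam), mul_one]
  · have : eps n k (fun i => (bet n k nu i : ℤ)) (fun i => (bet n k lam i : ℤ)) = 0 := by
      by_contra hc
      exact h (bet_eq n k hn lam nu hc)
    rw [this, mul_zero]

lemma fq_mk (n k : ℕ) (v : PartBox (n - 1) k →₀ ℤ) :
    fusionToQuot n k v = Ideal.Quotient.mk (fusionIdeal n k)
      (∑ σ : PartBox (n - 1) k, v σ • schurLam k (transpGen (partVal σ) k)) := by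
  rw [fusionToQuot, Finsupp.lift_apply, Finsupp.sum_fintype _ _ (by intro i; exact zero_smul _ _), map_sum]
  apply Finset.sum_congr rfl
  intro σ _
  rw [map_zsmul]

lemma final_inj (n k : ℕ) (hn : 2 ≤ n) (hk : 1 ≤ k) : Function.Injective (fusionToQuot n k) := by
  rw [injective_iff_map_eq_zero]
  intro v hv
  rw [fq_mk] at hv
  have hv' := Ideal.Quotient.eq_zero_iff_mem.1 hv
  ext nu
  have h := ell_ideal n k (by omega) hk (fun i => (bet n k nu i : ℤ)) _ hv' 1
  have h1 : (((1 : ↥(symmetricSubalgebra (Fin k) ℤ)) : MvPolynomial (Fin k) ℤ) *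
    ((∑ σ : PartBox (n - 1) k, v σ • schurLam k (transpGen (partVal σ) k) : ↥(symmetricSubalgebra (Fin k) ℤ)) : MvPolynomial (Fin k) ℤ) * ad k) =
      ∑ σ : PartBox (n - 1) k, v σ • ((schurLam k (transpGen (partVal σ) k) : MvPolynomial (Fin k) ℤ) * ad k) := by
    rw [Subalgebra.coe_one, one_mul, AddSubmonoidClass.coe_finset_sum, Finset.sum_mul]
    apply Finset.sum_congr rfl
    intro σ _
    rw [← smul_mul_assoc]
    rfl
  rw [h1, map_sum] at h
  simp only [map_zsmul, ell_schur n k hn hk, smul_eq_mul, mul_ite, mul_zero, Finset.sum_ite_eq', Finset.mem_univ, if_true] at h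
  rcases mul_eq_zero.1 h with h | h
  · exact h
  · exact absurd h (by exact_mod_cast k.factorial_ne_zero)
end FR

/-- At `z = 1`: all structure constants `⟨m(ν), s_λ(𝒜) m(μ)⟩` are
integers, and the ℤ-linear map sending a partition `λ ∈ 𝔓_{≤ n-1,k}` to the class of the
Schur polynomial `s_{λ^t}` in `Λ^{(k)}/⟨h_n - 1, h_{n+1}, …, h_{n+k-1}, h_{n+k} + (-1)^k e_k⟩`
is an isomorphism of rings. -/
theorem fusion_ring_isomorphism (n k : ℕ) [NeZero n] (hn : 2 ≤ n) (hk : 1 ≤ k) :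
    (∀ lam mu nu : PartBox (n - 1) k, ∃ c : ℤ,
        pairHk (Finsupp.single nu 1) (sAOp ℂ n k 1 lam (Finsupp.single mu 1)) = (c : ℂ)) ∧
    Function.Bijective (fusionToQuot n k) ∧
    (∀ lam mu : PartBox (n - 1) k,
        fusionToQuot n k (fusionMulZ n k lam mu) =
          fusionToQuot n k (Finsupp.single lam 1) * fusionToQuot n k (Finsupp.single mu 1)) ∧
    fusionToQuot n k (Finsupp.single (partEmpty (n - 1) k) 1) = 1 := by
  refine ⟨fun lam mu nu => ⟨_, FR.pair_eq lam mu nu⟩, ⟨FR.final_inj n k hn hk, FR.final_surj hn hk⟩, ?_, FR.final_one hn hk⟩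
  intro lam mu
  rw [FR.fusionMul_eq]
  exact FR.final_mul hn hk _ _
end
end

section
/- Let n ≥ 2 and work at z = 1 on the full state space H = ⊕_{k≥0} H_k, i.e. the complex vector space with basis all configurations m : ℤ/nℤ → ℕ; let φ_i*(m) = m + δ_i and φ_i(m) = m − δ_i if m_i ≥ 1, φ_i(m) = 0 otherwise. Then for every i ∈ ℤ/nℤ and every 1 ≤ r ≤ n−1 one has φ_i ∘ e_r(𝒜) ∘ φ_i* = e_r(𝒜) as endomorphisms of H. In particular, for all k ≥ 1, all j ∈ ℤ/nℤ and all μ, ν ∈ 𝔓_{≤n−1,k}: ⟨φ_j*(m(ν)), e_r(𝒜)·φ_j*(m(μ))⟩ = ⟨m(ν), e_r(𝒜)·m(μ)⟩ (the level-(k+1) fusion coefficient of a column (1^r) with both weights shifted by a creation operator equals the corresponding level-k coefficient). -/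
noncomputable section

open scoped BigOperators

/-- The full state space `H = ⊕_k H_k`: the complex vector space with basis all
configurations `m : ℤ/nℤ → ℕ`. -/
abbrev StateSpace (n : ℕ) := (ZMod n → ℕ) →₀ ℂ

/-- The creation operator `φ_i*`. -/
def creOp (n : ℕ) (i : ZMod n) : Module.End ℂ (StateSpace n) :=
  Finsupp.lift (StateSpace n) ℂ (ZMod n → ℕ) fun m =>
    Finsupp.single (fun c => m c + (Pi.single i 1 : ZMod n → ℕ) c) 1

/-- The annihilation operator `φ_i`. -/
def annOp (n : ℕ) (i : ZMod n) : Module.End ℂ (StateSpace n) :=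
  Finsupp.lift (StateSpace n) ℂ (ZMod n → ℕ) fun m =>
    if m i = 0 then 0 else Finsupp.single (fun c => m c - (Pi.single i 1 : ZMod n → ℕ) c) 1

/-- The hopping operator `a_i = φ_{i+1}* φ_i` at `z = 1`. -/
def hopOp (n : ℕ) (i : ZMod n) : Module.End ℂ (StateSpace n) :=
  Finsupp.lift (StateSpace n) ℂ (ZMod n → ℕ) fun m =>
    if m i = 0 then 0
    else
      Finsupp.single
        (fun c => m c - (Pi.single i 1 : ZMod n → ℕ) c + (Pi.single (i + 1) 1 : ZMod n → ℕ) c) 1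

/-- The noncommutative elementary symmetric polynomial `e_r(𝒜)` in the hopping operators. -/
def eFull (n : ℕ) [NeZero n] (r : ℕ) : Module.End ℂ (StateSpace n) :=
  ∑ I ∈ Finset.powersetCard r (Finset.univ : Finset (ZMod n)), cycProdDesc (hopOp n) I

/-- The Hermitian inner product on `H` making the configuration basis orthonormal. -/
def pairH {n : ℕ} (f g : StateSpace n) : ℂ :=
  g.sum fun m c => (starRingEnd ℂ) (f m) * c

theorem creOp_single {n : ℕ} (i : ZMod n) (m : ZMod n → ℕ) :
    creOp n i (Finsupp.single m 1) = Finsupp.single (m + Pi.single i 1) 1 := by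
  simp [creOp]; rfl

theorem annOp_single {n : ℕ} (i : ZMod n) (m : ZMod n → ℕ) :
    annOp n i (Finsupp.single m 1) =
      if m i = 0 then 0 else Finsupp.single (m - Pi.single i 1) 1 := by
  simp [annOp]; rfl

theorem hopOp_single {n : ℕ} (i : ZMod n) (m : ZMod n → ℕ) :
    hopOp n i (Finsupp.single m 1) =
      if m i = 0 then 0 else Finsupp.single (m - Pi.single i 1 + Pi.single (i + 1) 1) 1 := by
  simp [hopOp]; rfl

theorem end_ext {n : ℕ} {A B : Module.End ℂ (StateSpace n)}
    (h : ∀ m, A (Finsupp.single m 1) = B (Finsupp.single m 1)) : A = B := by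
  refine Finsupp.lhom_ext' fun m => LinearMap.ext_ring ?_
  simpa using h m

theorem ann_cre_self {n : ℕ} (i : ZMod n) : annOp n i * creOp n i = 1 := by
  refine end_ext fun m => ?_
  rw [Module.End.mul_apply, creOp_single, annOp_single]
  simp

theorem ann_cre_comm {n : ℕ} {i j : ZMod n} (h : i ≠ j) : Commute (annOp n i) (creOp n j) := by
  refine end_ext fun m => ?_
  rw [Module.End.mul_apply, Module.End.mul_apply, creOp_single, annOp_single, annOp_single]
  have h1 : (m + Pi.single j 1 : ZMod n → ℕ) i = m i := by simp [h]
  rw [h1]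
  split_ifs with h0
  · simp
  · rw [creOp_single]
    congr 1
    funext c
    by_cases hc : c = i
    · subst hc; simp [h]
    · simp [hc]

theorem cre_cre_comm {n : ℕ} (i j : ZMod n) : Commute (creOp n i) (creOp n j) := by
  refine end_ext fun m => ?_
  rw [Module.End.mul_apply, Module.End.mul_apply, creOp_single, creOp_single, creOp_single,
    creOp_single, add_right_comm]

theorem ann_ann_comm {n : ℕ} (i j : ZMod n) : Commute (annOp n i) (annOp n j) := by
  by_cases h : i = j
  · subst h; exact Commute.refl _
  refine end_ext fun m => ?_
  rw [Module.End.mul_apply, Module.End.mul_apply, annOp_single, annOp_single]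
  have h' : j ≠ i := Ne.symm h
  by_cases h1 : m i = 0 <;> by_cases h2 : m j = 0 <;>
    simp [h1, h2, annOp_single, h, h', tsub_right_comm]

theorem hop_eq {n : ℕ} (i : ZMod n) : hopOp n i = creOp n (i + 1) * annOp n i := by
  refine end_ext fun m => ?_
  rw [Module.End.mul_apply, hopOp_single, annOp_single]
  split_ifs
  · simp
  · rw [creOp_single]

theorem hop_cre_comm {n : ℕ} {i j : ZMod n} (h : j ≠ i) : Commute (hopOp n j) (creOp n i) := by
  rw [hop_eq]
  exact (cre_cre_comm _ _).mul_left (ann_cre_comm h)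

theorem ann_hop_comm {n : ℕ} {i j : ZMod n} (h : i ≠ j + 1) :
    Commute (annOp n i) (hopOp n j) := by
  rw [hop_eq]
  exact (ann_cre_comm h).mul_right (ann_ann_comm _ _)

theorem zgap_notMem {n : ℕ} [NeZero n] (I : Finset (ZMod n)) (hI : I ≠ Finset.univ) :
    zgap I ∉ I := by
  have hne : ((Finset.univ \ I).image ZMod.val).Nonempty := by
    rw [Finset.image_nonempty, Finset.sdiff_nonempty]
    intro h
    exact hI (Finset.univ_subset_iff.mp h)
  have h := Finset.min'_mem _ hne
  unfold zgap
  rw [dif_pos hne]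
  obtain ⟨x, hx, hx'⟩ := Finset.mem_image.mp h
  rw [← hx', ZMod.natCast_zmod_val]
  exact (Finset.mem_sdiff.mp hx).2

theorem cast_inj_lt {n a b : ℕ} (ha : a < n) (hb : b < n) (h : (a : ZMod n) = b) : a = b := by
  rw [ZMod.natCast_eq_natCast_iff] at h
  exact Nat.ModEq.eq_of_lt_of_lt h ha hb

theorem conj_cycProd {n : ℕ} [NeZero n] (hn : 2 ≤ n) (i : ZMod n) (I : Finset (ZMod n))
    (hI : I ≠ Finset.univ) :
    annOp n i * cycProdDesc (hopOp n) I * creOp n i = cycProdDesc (hopOp n) I := by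
  have hg := zgap_notMem I hI
  unfold cycProdDesc
  generalize zgap I = g at *
  set F : ℕ → Module.End ℂ (StateSpace n) := fun t =>
    if g - 1 - (t : ZMod n) ∈ I then hopOp n (g - 1 - (t : ZMod n)) else 1 with hF
  have hL : (List.map (fun t : ZMod n => if g - 1 - t ∈ I then hopOp n (g - 1 - t) else 1) (do
      let a ← List.range n
      pure (a : ZMod n))) = (List.range n).map F := by
    simp only [List.bind_eq_flatMap, List.pure_def, ← List.map_eq_flatMap, List.map_map]
    rfl
  rw [hL]
  have hcre : ∀ t : ℕ, (g - 1 - (t : ZMod n) ∈ I → g - 1 - (t : ZMod n) ≠ i) →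
      Commute (F t) (creOp n i) := by
    intro t ht
    simp only [hF]
    split_ifs with h
    · exact hop_cre_comm (ht h)
    · exact Commute.one_left _
  have hann : ∀ t : ℕ, i ≠ g - 1 - (t : ZMod n) + 1 → Commute (annOp n i) (F t) := by
    intro t ht
    simp only [hF]
    split_ifs with h
    · exact ann_hop_comm ht
    · exact Commute.one_right _
  by_cases hig : i = g
  · have hc : Commute ((List.range n).map F).prod (creOp n i) := by
      apply Commute.list_prod_left
      intro x hx
      obtain ⟨t, -, rfl⟩ := List.mem_map.mp hx
      refine hcre t fun h h' => hg ?_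
      rw [← hig, ← h']; exact h
    rw [mul_assoc, hc.eq, ← mul_assoc, ann_cre_self, one_mul]
  · obtain ⟨t0, ht0, hi⟩ : ∃ t0 : ℕ, t0 < n ∧ i = g - 1 - (t0 : ZMod n) :=
      ⟨(g - 1 - i).val, ZMod.val_lt _, by rw [ZMod.natCast_zmod_val]; ring⟩
    have ht1 : t0 + 1 < n := by
      rcases Nat.lt_or_ge (t0 + 1) n with h | h
      · exact h
      · exfalso
        apply hig
        have : t0 + 1 = n := by omega
        have h2 : ((t0 + 1 : ℕ) : ZMod n) = 0 := by rw [this]; simp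
        push_cast at h2
        rw [hi]
        linear_combination -h2
    obtain ⟨d, hd⟩ : ∃ d, n = (t0 + 1) + d := ⟨n - (t0 + 1), by omega⟩
    have hsplit : List.range n = List.range t0 ++ [t0] ++
        (List.range d).map (fun x => (t0 + 1) + x) := by
      conv_lhs => rw [hd, List.range_add, List.range_succ]
    rw [hsplit, List.map_append, List.map_append, List.prod_append, List.prod_append]
    set P := ((List.range t0).map F).prod with hP
    set Q := (((List.range d).map (fun x => (t0 + 1) + x)).map F).prod with hQ
    have hPc : Commute (annOp n i) P := by
      apply Commute.list_prod_right
      intro x hx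
      obtain ⟨t, ht, rfl⟩ := List.mem_map.mp hx
      rw [List.mem_range] at ht
      refine hann t fun h => ?_
      have h3 : ((t0 + 1 : ℕ) : ZMod n) = (t : ℕ) := by
        push_cast
        rw [hi] at h
        linear_combination -h
      have := cast_inj_lt ht1 (by omega) h3
      omega
    have hQc : Commute Q (creOp n i) := by
      apply Commute.list_prod_left
      intro x hx
      obtain ⟨t, ht, rfl⟩ := List.mem_map.mp hx
      obtain ⟨y, hy, rfl⟩ := List.mem_map.mp ht
      rw [List.mem_range] at hy
      refine hcre _ fun _ h => ?_
      have h3 : ((t0 + 1 + y : ℕ) : ZMod n) = (t0 : ℕ) := by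
        rw [hi] at h
        linear_combination -h
      have := cast_inj_lt (by omega) (by omega) h3
      omega
    have hmid : annOp n i * F t0 * creOp n i = F t0 := by
      simp only [hF]
      rw [← hi]
      split_ifs with h
      · have hne : i ≠ i + 1 := by
          intro h
          have h3 : ((1 : ℕ) : ZMod n) = (0 : ℕ) := by
            push_cast
            linear_combination -h
          have := cast_inj_lt (by omega) (by omega) h3
          omega
        rw [(ann_hop_comm hne).eq, mul_assoc, ann_cre_self, mul_one]
      · rw [mul_one, ann_cre_self]
    simp only [List.map_cons, List.map_nil, List.prod_cons, List.prod_nil, mul_one]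
    calc annOp n i * (P * F t0 * Q) * creOp n i
        = (annOp n i * P) * F t0 * (Q * creOp n i) := by simp only [mul_assoc]
      _ = P * (annOp n i * F t0 * creOp n i) * Q := by
          rw [hPc.eq, hQc.eq]; simp only [mul_assoc]
      _ = P * F t0 * Q := by rw [hmid]

theorem conj_eFull {n : ℕ} [NeZero n] (hn : 2 ≤ n) (i : ZMod n) (r : ℕ) (hr : r ≤ n - 1) :
    annOp n i * eFull n r * creOp n i = eFull n r := by
  unfold eFull
  rw [Finset.mul_sum, Finset.sum_mul]
  refine Finset.sum_congr rfl fun I hI => conj_cycProd hn i I ?_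
  rintro rfl
  have := (Finset.mem_powersetCard.mp hI).2
  rw [Finset.card_univ, ZMod.card] at this
  omega

theorem pairH_single {n : ℕ} (m : ZMod n → ℕ) (g : StateSpace n) :
    pairH (Finsupp.single m 1) g = g m := by
  classical
  unfold pairH Finsupp.sum
  rw [Finset.sum_eq_single m]
  · simp
  · intro b _ hb
    simp [Finsupp.single_apply, Ne.symm hb]
  · intro h
    simp [Finsupp.notMem_support_iff.mp h]

theorem ann_apply {n : ℕ} (j : ZMod n) (m : ZMod n → ℕ) (g : StateSpace n) :
    (annOp n j g) m = g (m + Pi.single j 1) := by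
  classical
  have : Finsupp.lapply m ∘ₗ annOp n j
      = (Finsupp.lapply (m + Pi.single j 1) : StateSpace n →ₗ[ℂ] ℂ) := by
    refine Finsupp.lhom_ext' fun p => LinearMap.ext_ring ?_
    simp only [LinearMap.comp_apply, Finsupp.lsingle_apply, Finsupp.lapply_apply, annOp_single]
    split_ifs with h
    · rw [Finsupp.single_apply, if_neg]
      · rfl
      · rintro rfl
        simp at h
    · rw [Finsupp.single_apply, Finsupp.single_apply]
      congr 1
      have hle : (Pi.single j 1 : ZMod n → ℕ) ≤ p := by
        intro c
        by_cases hc : c = j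
        · subst hc; simp; omega
        · simp [hc]
      rw [eq_iff_iff]
      exact tsub_eq_iff_eq_add_of_le hle
  exact LinearMap.congr_fun this g

/-- At `z = 1`, `φ_i ∘ e_r(𝒜) ∘ φ_i* = e_r(𝒜)` on the full state space
`H`, for every site `i` and every `1 ≤ r ≤ n-1`.  In particular the level-`(k+1)` fusion
coefficients of a column with both weights shifted by a creation operator equal the
corresponding level-`k` coefficients:
`⟨φ_j* m(ν), e_r(𝒜) φ_j* m(μ)⟩ = ⟨m(ν), e_r(𝒜) m(μ)⟩`. -/
theorem creation_conjugation_invariance (n : ℕ) [NeZero n] (hn : 2 ≤ n) :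
    (∀ (i : ZMod n) (r : ℕ), 1 ≤ r → r ≤ n - 1 →
        annOp n i * eFull n r * creOp n i = eFull n r) ∧
    (∀ (k : ℕ), 1 ≤ k → ∀ (j : ZMod n) (mu nu : PartBox (n - 1) k) (r : ℕ),
        1 ≤ r → r ≤ n - 1 →
        pairH (creOp n j (Finsupp.single (cfgOf n k nu) 1))
            (eFull n r (creOp n j (Finsupp.single (cfgOf n k mu) 1))) =
          pairH (Finsupp.single (cfgOf n k nu) 1)
            (eFull n r (Finsupp.single (cfgOf n k mu) 1))) := by
  refine ⟨fun i r _ hr => conj_eFull hn i r hr, fun k _ j mu nu r _ hr => ?_⟩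
  rw [pairH_single, creOp_single (m := cfgOf n k nu), pairH_single, ← ann_apply]
  conv_rhs => rw [← conj_eFull hn j r hr]
  rfl
end
end

section
/- Let n, k ≥ 1, set N = n+k, let q ∈ ℂ∖{0}, and fix t ∈ ℂ with t^N = q. For σ ∈ 𝔓_{≤n,k} define y_σ ∈ ℂ^k by (y_σ)_j = t·ζ^{I^{(k)}(σ^t)_j} for j = 1,…,k. Then: (i) the entries of y_σ are pairwise distinct and satisfy (y_σ)_j^N = (−1)^{k−1} q for every j; (ii) the assignment σ ↦ (orbit of y_σ under permutation of coordinates) is a bijection from 𝔓_{≤n,k} onto the set of orbits, under the permutation action of the symmetric group S_k on ℂ^k, of the tuples y ∈ ℂ^k with pairwise distinct entries satisfying y_1^N = y_2^N = ⋯ = y_k^N = (−1)^{k−1} q. -/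
noncomputable section

open scoped BigOperators

/-- The set of tuples `y ∈ ℂ^k` with pairwise distinct entries satisfying
`y_1^N = ⋯ = y_k^N = (-1)^{k-1} q`, where `N = n + k`. -/
def fermiSol (n k : ℕ) (q : ℂ) : Set (Fin k → ℂ) :=
  {y | Function.Injective y ∧ ∀ j, y j ^ (n + k) = (-1) ^ (k - 1) * q}

/-- The free-fermion Bethe root `y_σ` attached to `σ ∈ 𝔓_{≤ n,k}`:
`(y_σ)_j = t · ζ^{I^{(k)}(σ^t)_j}` where `t^N = q`. -/
def fermiRoot (n k : ℕ) (t : ℂ) (σ : PartBox n k) (j : Fin k) : ℂ :=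
  t * zeta (n + k) (Imap k (transpGen (partVal σ) k) j)

theorem lower_mem_iff {r : ℕ} (S : Finset (Fin r)) (hS : ∀ i j : Fin r, i ≤ j → j ∈ S → i ∈ S)
    (i : Fin r) : (i : ℕ) < S.card ↔ i ∈ S := by
  constructor
  · intro h
    by_contra hi
    have : S ⊆ Finset.Iio i := by
      intro j hj
      rw [Finset.mem_Iio]
      by_contra hle
      exact hi (hS i j (not_lt.mp hle) hj)
    have := Finset.card_le_card this
    rw [Fin.card_Iio] at this
    omega
  · intro h
    have : Finset.Iic i ⊆ S := by
      intro j hj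
      exact hS j i (Finset.mem_Iic.mp hj) h
    have := Finset.card_le_card this
    rw [Fin.card_Iic] at this
    omega

theorem transp_lt_iff {r : ℕ} (μ : Fin r → ℕ) (hμ : ∀ i j : Fin r, i ≤ j → μ j ≤ μ i) (c : ℕ)
    (i : Fin r) (j : Fin c) : (i : ℕ) < transpGen μ c j ↔ (j : ℕ) < μ i := by
  unfold transpGen
  rw [lower_mem_iff]
  · simp [Nat.succ_le_iff]
  · intro a b hab hb
    simp only [Finset.mem_filter, Finset.mem_univ, true_and] at hb ⊢
    exact hb.trans (hμ a b hab)

theorem transp_le {r : ℕ} (μ : Fin r → ℕ) (c : ℕ) (j : Fin c) : transpGen μ c j ≤ r := by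
  unfold transpGen
  exact (Finset.card_le_univ _).trans (by simp)

theorem transp_anti {r : ℕ} (μ : Fin r → ℕ) (c : ℕ) (i j : Fin c) (hij : i ≤ j) :
    transpGen μ c j ≤ transpGen μ c i := by
  unfold transpGen
  apply Finset.card_le_card
  intro a ha
  simp only [Finset.mem_filter, Finset.mem_univ, true_and] at ha ⊢
  have : (i : ℕ) ≤ j := hij
  omega

theorem transp_transp {r c : ℕ} (μ : Fin r → ℕ) (hμ : ∀ i j : Fin r, i ≤ j → μ j ≤ μ i)
    (hc : ∀ i, μ i ≤ c) : transpGen (transpGen μ c) r = μ := by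
  funext i
  have key : ∀ j : Fin c, (j : ℕ) < transpGen (transpGen μ c) r i ↔ (j : ℕ) < μ i := by
    intro j
    rw [transp_lt_iff _ (transp_anti μ c), transp_lt_iff _ hμ]
  have h1 := transp_le (transpGen μ c) r i
  have h2 := hc i
  rcases lt_trichotomy (transpGen (transpGen μ c) r i) (μ i) with h | h | h
  · have := key ⟨_, h.trans_le h2⟩
    simp only at this
    omega
  · exact h
  · have := key ⟨_, h.trans_le h1⟩
    simp only at this
    omega

/-- integer exponents -/
def aexp (n k : ℕ) (σ : PartBox n k) (j : Fin k) : ℕ :=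
  transpGen (partVal σ) k j.rev + j

theorem aexp_strictMono (n k : ℕ) (σ : PartBox n k) : StrictMono (aexp n k σ) := by
  intro i j hij
  have := transp_anti (partVal σ) k j.rev i.rev (Fin.rev_le_rev.mpr hij.le)
  have h : (i : ℕ) < j := hij
  unfold aexp
  omega

theorem aexp_lt (n k : ℕ) (σ : PartBox n k) (j : Fin k) : aexp n k σ j < n + k := by
  have := transp_le (partVal σ) k j.rev
  have := j.2
  unfold aexp
  omega

/-- the constant -/
def cst (n k : ℕ) (t : ℂ) : ℂ :=
  t * Complex.exp (Real.pi * Complex.I * (1 - (k : ℂ)) / ((n + k : ℕ) : ℂ))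

theorem fermiRoot_eq (n k : ℕ) (hk : 1 ≤ k) (t : ℂ) (σ : PartBox n k) (j : Fin k) :
    fermiRoot n k t σ j =
      cst n k t * Complex.exp (2 * Real.pi * Complex.I / ((n + k : ℕ) : ℂ)) ^ aexp n k σ j := by
  unfold fermiRoot cst zeta Imap
  rw [← Complex.exp_nat_mul, mul_assoc t, ← Complex.exp_add]
  congr 2
  unfold aexp
  push_cast
  ring

theorem cst_pow (n k : ℕ) (hk : 1 ≤ k) (t : ℂ) :
    cst n k t ^ (n + k) = (-1) ^ (k - 1) * t ^ (n + k) := by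
  have hN : ((n + k : ℕ) : ℂ) ≠ 0 := by
    exact_mod_cast (by omega : n + k ≠ 0)
  unfold cst
  rw [mul_pow, ← Complex.exp_nat_mul, mul_div_cancel₀ _ hN, mul_comm]
  congr 1
  obtain ⟨m, rfl⟩ : ∃ m, k = m + 1 := ⟨k - 1, by omega⟩
  have : (Real.pi * Complex.I * (1 - ((m + 1 : ℕ) : ℂ))) = -(m * (Real.pi * Complex.I)) := by
    push_cast; ring
  rw [this, Complex.exp_neg, Complex.exp_nat_mul, Complex.exp_pi_mul_I, ← inv_pow]
  norm_num

theorem strictMono_gap {k : ℕ} (e : Fin k → ℕ) (he : StrictMono e) (i j : Fin k) (hij : i ≤ j) :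
    e i + (j - i : ℕ) ≤ e j := by
  obtain ⟨j, hj⟩ := j
  induction j with
  | zero =>
    have : i = ⟨0, hj⟩ := le_antisymm hij (Nat.zero_le _)
    subst this
    simp
  | succ m ih =>
    rcases eq_or_lt_of_le hij with h | h
    · subst h; simp
    · have h' : (i : ℕ) < m + 1 := h
      have h1 := ih (by omega) (Fin.le_def.mpr (by simp only; omega))
      have h2 : e ⟨m, by omega⟩ < e ⟨m + 1, hj⟩ := he (Fin.lt_def.mpr (by simp))
      simp only at h1 ⊢
      omega

theorem exists_aexp (n k : ℕ) (e : Fin k → ℕ) (he : StrictMono e) (hb : ∀ j, e j < n + k) :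
    ∃ σ : PartBox n k, aexp n k σ = e := by
  have hle : ∀ j : Fin k, (j : ℕ) ≤ e j := by
    intro j
    have := strictMono_gap e he ⟨0, by have := j.2; omega⟩ j (Nat.zero_le _)
    simp only at this
    omega
  have hup : ∀ j : Fin k, e j ≤ n + j := by
    intro j
    have hj := j.2
    have := strictMono_gap e he j ⟨k - 1, by omega⟩ (Fin.le_def.mpr (by simp only; omega))
    have := hb ⟨k - 1, by omega⟩
    simp only at *
    omega
  let μ : Fin k → ℕ := fun j => e j.rev - j.rev
  have hμ : ∀ i j : Fin k, i ≤ j → μ j ≤ μ i := by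
    intro i j hij
    have hr : j.rev ≤ i.rev := Fin.rev_le_rev.mpr hij
    have h1 := strictMono_gap e he _ _ hr
    have h2 : (j.rev : ℕ) ≤ i.rev := hr
    have := hle j.rev
    simp only [μ]
    omega
  have hc : ∀ i, μ i ≤ n := by
    intro i
    have := hup i.rev
    simp only [μ]
    omega
  refine ⟨⟨fun i => ⟨transpGen μ n i, Nat.lt_succ_of_le (transp_le μ n i)⟩, ?_⟩, ?_⟩
  · intro i j hij
    exact transp_anti μ n i j hij
  · funext j
    have h := congrFun (transp_transp μ hμ hc) j.rev
    have h3 := hle j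
    unfold aexp
    change transpGen (transpGen μ n) k j.rev + (j : ℕ) = e j
    rw [h]
    simp only [μ, Fin.rev_rev]
    omega

theorem aexp_inj (n k : ℕ) (σ τ : PartBox n k) (h : aexp n k σ = aexp n k τ) : σ = τ := by
  have h1 : transpGen (partVal σ) k = transpGen (partVal τ) k := by
    funext j
    have := congrFun h j.rev
    unfold aexp at this
    rw [Fin.rev_rev] at this
    omega
  have h2 : partVal σ = partVal τ := by
    rw [← transp_transp (partVal σ) σ.2 (fun i => Nat.le_of_lt_succ (σ.1 i).2), h1,
      transp_transp (partVal τ) τ.2 (fun i => Nat.le_of_lt_succ (τ.1 i).2)]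
  apply Subtype.ext
  funext i
  exact Fin.ext (congrFun h2 i)

/-- Classification of the solutions of the free-fermion Bethe Ansatz
equations `y_j^N = (-1)^{k-1} q`:
(i) each `y_σ` is a solution with pairwise distinct entries;
(ii) `σ ↦ S_k-orbit of y_σ` is a bijection from `𝔓_{≤n,k}` onto the set of `S_k`-orbits of
tuples with pairwise distinct entries solving the equations. -/
theorem fermi_bethe_roots_classification (n k : ℕ) (hn : 1 ≤ n) (hk : 1 ≤ k)
    (q : ℂ) (hq : q ≠ 0) (t : ℂ) (ht : t ^ (n + k) = q) :
    (∀ σ : PartBox n k, fermiRoot n k t σ ∈ fermiSol n k q) ∧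
    (∀ y ∈ fermiSol n k q, ∃ σ : PartBox n k, ∃ π : Equiv.Perm (Fin k),
        y = fermiRoot n k t σ ∘ π) ∧
    (∀ σ τ : PartBox n k,
        (∃ π : Equiv.Perm (Fin k), fermiRoot n k t σ ∘ π = fermiRoot n k t τ) → σ = τ) := by
  have hN : n + k ≠ 0 := by omega
  have hw := Complex.isPrimitiveRoot_exp (n + k) hN
  have hcp : cst n k t ^ (n + k) = (-1) ^ (k - 1) * q := by rw [cst_pow n k hk, ht]
  have hc0 : cst n k t ≠ 0 := by
    intro h0
    rw [h0, zero_pow hN] at hcp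
    exact mul_ne_zero (pow_ne_zero _ (by norm_num)) hq hcp.symm
  have hinj : ∀ σ τ : PartBox n k, ∀ i j,
      fermiRoot n k t σ i = fermiRoot n k t τ j → aexp n k σ i = aexp n k τ j := by
    intro σ τ i j h
    rw [fermiRoot_eq n k hk, fermiRoot_eq n k hk] at h
    exact hw.pow_inj (aexp_lt n k σ i) (aexp_lt n k τ j) (mul_left_cancel₀ hc0 h)
  refine ⟨?_, ?_, ?_⟩
  · intro σ
    refine ⟨fun i j h => (aexp_strictMono n k σ).injective (hinj σ σ i j h), fun j => ?_⟩
    rw [fermiRoot_eq n k hk, mul_pow, hcp, ← pow_mul, mul_comm (aexp n k σ j), pow_mul,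
      hw.pow_eq_one, one_pow, mul_one]
  · rintro y ⟨hy, hyN⟩
    have hex : ∀ j, ∃ i < n + k,
        Complex.exp (2 * Real.pi * Complex.I / ((n + k : ℕ) : ℂ)) ^ i = y j / cst n k t := by
      intro j
      haveI : NeZero (n + k) := ⟨hN⟩
      apply hw.eq_pow_of_pow_eq_one
      rw [div_pow, hyN, hcp, div_self]
      rw [← hcp]
      exact pow_ne_zero _ hc0
    choose b hbN hb using hex
    have hyb : ∀ j, y j = cst n k t *
        Complex.exp (2 * Real.pi * Complex.I / ((n + k : ℕ) : ℂ)) ^ b j := by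
      intro j
      rw [hb, mul_div_cancel₀ _ hc0]
    have hbi : Function.Injective b := by
      intro i j h
      apply hy
      rw [hyb, hyb, h]
    have hcard : (Finset.univ.image b).card = k := by
      rw [Finset.card_image_of_injective _ hbi]; simp
    let e := (Finset.univ.image b).orderEmbOfFin hcard
    have hmem : ∀ j, e j ∈ Finset.univ.image b := fun j => Finset.orderEmbOfFin_mem _ hcard j
    obtain ⟨σ, hσ⟩ := exists_aexp n k e e.strictMono (by
      intro j
      obtain ⟨i, -, hi⟩ := Finset.mem_image.mp (hmem j)
      rw [← hi]
      exact hbN i)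
    have hr : ∀ i, ∃ j, e j = b i := by
      intro i
      have : b i ∈ Set.range e := by
        rw [Finset.range_orderEmbOfFin]
        simp
      exact this
    choose p hp using hr
    have hpi : Function.Injective p := by
      intro i j h
      apply hbi
      rw [← hp, ← hp, h]
    refine ⟨σ, Equiv.ofBijective p (Finite.injective_iff_bijective.mp hpi), ?_⟩
    funext i
    simp only [Function.comp, Equiv.ofBijective_apply]
    rw [fermiRoot_eq n k hk, hσ, hp, hyb]
  · rintro σ τ ⟨π, hπ⟩
    apply aexp_inj
    have h : aexp n k σ ∘ π = aexp n k τ := by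
      funext j
      exact hinj σ τ (π j) j (congrFun hπ j)
    rw [← StrictMono.range_inj (aexp_strictMono n k σ) (aexp_strictMono n k τ), ← h,
      EquivLike.range_comp]
end
end
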